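/- arXiv:1712.08882 — 6 statements merged into one kernel-verified Lean document; each statement's English description precedes it below -/
import Mathlib

section
/- Let b ≥ 2 be an integer and let Y ⊆ [0,1] be a closed T_b-invariant set. Then for every t ∈ [0,1) whose class mod 1 lies in F_{b,Y}(Y), the number b^{−t} belongs to Y − Y mod 1, i.e. there exist y, y' ∈ Y with y − y' ≡ b^{−t} (mod 1). -/
/-!
Let `u n, v n ∈ Y` converge to the same point, with `-log_b |u n - v n| → t` mod `1`. Put
`s n = -log_b |u n - v n|` and let `k n` be the integer nearest to `s n - t`, so that
`s n - t - k n → 0` and hence `b ^ (k n) * |u n - v n| = b ^ (k n - s n) → b ^ (-t)`. Since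
`u n - v n → 0`, eventually `k n ≥ 0`; as `Y` is `T_b`-invariant, the classes mod `1` of
`b ^ (k n) * u n` and `b ^ (k n) * v n` are then represented in `Y`, so the class of
`b ^ (k n) * |u n - v n|` lies in `Y - Y` mod `1`. That set is the continuous image of the compact
set `Y × Y`, hence closed, and so contains the limit `b ^ (-t)`.
-/

open Filter Topology Set MeasureTheory ENNReal

/-- `T_a x = a x mod 1` on `[0,1]`. -/
noncomputable def Ta (a : ℕ) (x : ℝ) : ℝ := Int.fract (a * x)

/-- `T_a` on the circle `ℝ/ℤ`. -/
noncomputable def TaC (a : ℕ) (x : AddCircle (1:ℝ)) : AddCircle (1:ℝ) := a • x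

/-- the `a`-adic fractional part `{s}_a = -log_a |s| mod 1`, as an element of `ℝ/ℤ`. -/
noncomputable def fracPart (a : ℕ) (s : ℝ) : AddCircle (1:ℝ) :=
  ((-Real.logb a |s| : ℝ) : AddCircle (1:ℝ))

/-- the `a`-adic local difference set `F_{a,X}(x)` of `X ⊆ ℝ` at `x`. -/
def localDiffSet (a : ℕ) (X : Set ℝ) (x : ℝ) : Set (AddCircle (1:ℝ)) :=
  { t | ∃ u v : ℕ → ℝ,
      (∀ n, u n ∈ X) ∧ (∀ n, v n ∈ X) ∧ (∀ n, u n ≠ v n) ∧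
      Tendsto u atTop (nhds x) ∧ Tendsto v atTop (nhds x) ∧
      Tendsto (fun n => fracPart a (u n - v n)) atTop (nhds t) }

/-- `F_{a,X}(X) = ⋃_{x ∈ X} F_{a,X}(x)`. -/
def localDiffSetTotal (a : ℕ) (X : Set ℝ) : Set (AddCircle (1:ℝ)) :=
  ⋃ x ∈ X, localDiffSet a X x

/-- the `a`-adic local difference set of `X ⊆ ℝ/ℤ` at `x ∈ ℝ/ℤ`, defined via lifts:
the difference `u n - v n` is lifted to a real number `d n` tending to `0`. -/
def localDiffSetC (a : ℕ) (X : Set (AddCircle (1:ℝ))) (x : AddCircle (1:ℝ)) :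
    Set (AddCircle (1:ℝ)) :=
  { t | ∃ (u v : ℕ → AddCircle (1:ℝ)) (d : ℕ → ℝ),
      (∀ n, u n ∈ X) ∧ (∀ n, v n ∈ X) ∧ (∀ n, u n ≠ v n) ∧ (∀ n, d n ≠ 0) ∧
      (∀ n, ((d n : ℝ) : AddCircle (1:ℝ)) = u n - v n) ∧
      Tendsto u atTop (nhds x) ∧ Tendsto v atTop (nhds x) ∧
      Tendsto d atTop (nhds 0) ∧
      Tendsto (fun n => fracPart a (d n)) atTop (nhds t) }

/-- `F_{a,X}(X)` for `X ⊆ ℝ/ℤ`. -/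
def localDiffSetTotalC (a : ℕ) (X : Set (AddCircle (1:ℝ))) : Set (AddCircle (1:ℝ)) :=
  ⋃ x ∈ X, localDiffSetC a X x

/-- a point whose forward orbit `{T_a^n x : n ≥ 1}` is dense in `X`. -/
noncomputable def IsTransitivePoint (a : ℕ) (X : Set ℝ) (x : ℝ) : Prop :=
  X ⊆ closure {y | ∃ n : ℕ, 1 ≤ n ∧ (Ta a)^[n] x = y}

/-- a `C²`-diffeomorphism of `ℝ`. -/
def IsC2Diffeo (f : ℝ → ℝ) : Prop :=
  ContDiff ℝ 2 f ∧ Function.Bijective f ∧ ∀ x, deriv f x ≠ 0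

/-- a `C¹`-diffeomorphism of `ℝ`. -/
def IsC1Diffeo (f : ℝ → ℝ) : Prop :=
  ContDiff ℝ 1 f ∧ Function.Bijective f ∧ ∀ x, deriv f x ≠ 0

/-- piecewise curved: `f` is `C¹` and `f'` is strictly monotone near every point outside
a discrete set. -/
def PiecewiseCurved (f : ℝ → ℝ) : Prop :=
  ContDiff ℝ 1 f ∧ ∃ E : Set ℝ, DiscreteTopology E ∧
    ∀ x : ℝ, x ∉ E → ∃ U ∈ nhds x, StrictMonoOn (deriv f) U ∨ StrictAntiOn (deriv f) U

/-- `X` is self-restricted: `X - X ≠ [0,1] mod 1`. -/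
def SelfRestricted (X : Set ℝ) : Prop :=
  {t : AddCircle (1:ℝ) | ∃ x ∈ X, ∃ y ∈ X, ((x - y : ℝ) : AddCircle (1:ℝ)) = t} ≠ Set.univ

/-- the covering number `N(X,r)`: minimal number of `r`-balls needed to cover `X`. -/
noncomputable def coveringNumber (r : ℝ) (X : Set ℝ) : ℝ≥0∞ :=
  ⨅ (s : Finset ℝ) (_ : X ⊆ ⋃ c ∈ s, Metric.ball c r), (s.card : ℝ≥0∞)

/-- upper box (Minkowski) dimension. -/
noncomputable def upperBoxDim (X : Set ℝ) : ℝ≥0∞ :=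
  Filter.limsup
    (fun r : ℝ =>
      if coveringNumber r X = ⊤ then ⊤
      else ENNReal.ofReal (Real.log (coveringNumber r X).toReal / Real.log (1 / r)))
    (nhdsWithin 0 (Set.Ioi (0:ℝ)))

/-- a probability measure has dimension `t`: it gives mass `< 1` to every Borel set of
Hausdorff dimension `< t`, and is supported on a Borel set of Hausdorff dimension `t`. -/
def HasDimension (μ : Measure ℝ) (t : ℝ≥0∞) : Prop :=
  (∀ E : Set ℝ, MeasurableSet E → dimH E < t → μ E < 1) ∧
  ∃ S : Set ℝ, MeasurableSet S ∧ dimH S = t ∧ μ Sᶜ = 0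

/-- a piecewise `C²`-diffeomorphism of `ℝ` (relative to `X`): a finite partition of `ℝ` into
intervals, on each of which `f` restricts to a `C²`-diffeomorphism onto its image (except
possibly at the endpoints, which lie outside `X`). -/
def IsPiecewiseC2Diffeo (f : ℝ → ℝ) (X : Set ℝ) : Prop :=
  ∃ (N : ℕ) (I : Fin N → Set ℝ),
    (∀ i, (I i).OrdConnected) ∧
    (⋃ i, I i) = Set.univ ∧
    Pairwise (Function.onFun Disjoint I) ∧
    (∀ i, ContinuousOn f (I i)) ∧
    (∀ i, Set.InjOn f (I i)) ∧
    (∀ i, ContDiffOn ℝ 2 f (interior (I i))) ∧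
    (∀ i, ∀ x ∈ interior (I i), deriv f x ≠ 0) ∧
    (∀ i, frontier (I i) ∩ X = ∅)

/-- An invariant set is, modulo `1`, closed under multiplication by powers of `b`. -/
lemma exists_mem_coe_eq_pow_mul {b : ℕ} {Y : Set ℝ} (hYinv : Set.MapsTo (Ta b) Y Y)
    {x : ℝ} (hx : x ∈ Y) (k : ℕ) :
    ∃ y ∈ Y, ((y : ℝ) : AddCircle (1:ℝ)) = (((b : ℝ) ^ k * x : ℝ) : AddCircle (1:ℝ)) := by
  induction k with
  | zero => exact ⟨x, hx, by simp⟩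
  | succ k ih =>
    obtain ⟨y, hy, hyx⟩ := ih
    refine ⟨Ta b y, hYinv hy, ?_⟩
    have h1 : ((Ta b y : ℝ) : AddCircle (1:ℝ)) = (((b : ℝ) * y : ℝ) : AddCircle (1:ℝ)) := by
      unfold Ta
      exact AddCircle.coe_fract _
    have h2 : ∀ z : ℝ, (((b : ℝ) * z : ℝ) : AddCircle (1:ℝ)) = b • (z : AddCircle (1:ℝ)) := by
      intro z
      rw [← nsmul_eq_mul, AddCircle.coe_nsmul]
    rw [h1, h2, hyx, ← h2]
    ring_nf

/-- `Y - Y` mod `1`, as a subset of the circle. -/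
def diffMod (Y : Set ℝ) : Set (AddCircle (1:ℝ)) :=
  (fun p : ℝ × ℝ => ((p.1 - p.2 : ℝ) : AddCircle (1:ℝ))) '' (Y ×ˢ Y)

lemma isClosed_diffMod {Y : Set ℝ} (hY : IsCompact Y) : IsClosed (diffMod Y) :=
  ((hY.prod hY).image ((AddCircle.continuous_mk' (1:ℝ)).comp
    (continuous_fst.sub continuous_snd))).isClosed

lemma coe_pow_mul_sub_mem_diffMod {b : ℕ} {Y : Set ℝ} (hYinv : Set.MapsTo (Ta b) Y Y)
    {x z : ℝ} (hx : x ∈ Y) (hz : z ∈ Y) (k : ℕ) :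
    (((b : ℝ) ^ k * |x - z| : ℝ) : AddCircle (1:ℝ)) ∈ diffMod Y := by
  wlog h : z ≤ x generalizing x z
  · rw [abs_sub_comm]
    exact this hz hx (le_of_not_ge h)
  obtain ⟨y, hy, hyx⟩ := exists_mem_coe_eq_pow_mul hYinv hx k
  obtain ⟨y', hy', hyz⟩ := exists_mem_coe_eq_pow_mul hYinv hz k
  refine ⟨(y, y'), ⟨hy, hy'⟩, ?_⟩
  rw [abs_of_nonneg (sub_nonneg.2 h), mul_sub, AddCircle.coe_sub, ← hyx, ← hyz]
  exact AddCircle.coe_sub (p := (1:ℝ)) _ _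

/-- **Proposition 3.1, first part.** If `Y ⊆ [0,1]` is closed and `T_b`-invariant, then for
`t ∈ [0,1)` with `t mod 1 ∈ F_{b,Y}(Y)`, we have `b^{-t} ∈ Y - Y (mod 1)`. -/
theorem localDiffSetTotal_subset_difference_set
    (b : ℕ) (hb : 2 ≤ b) (Y : Set ℝ) (hYsub : Y ⊆ Set.Icc 0 1) (hYcl : IsClosed Y)
    (hYinv : Set.MapsTo (Ta b) Y Y)
    (t : ℝ) (ht0 : 0 ≤ t) (ht1 : t < 1)
    (htF : ((t : ℝ) : AddCircle (1:ℝ)) ∈ localDiffSetTotal b Y) :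
    ∃ y ∈ Y, ∃ y' ∈ Y,
      ((y - y' : ℝ) : AddCircle (1:ℝ)) = (((b : ℝ) ^ (-t) : ℝ) : AddCircle (1:ℝ)) := by
  have hYc : IsCompact Y := isCompact_Icc.of_isClosed_subset hYcl hYsub
  suffices h : (((b : ℝ) ^ (-t) : ℝ) : AddCircle (1:ℝ)) ∈ diffMod Y by
    obtain ⟨⟨y, y'⟩, ⟨hy, hy'⟩, h⟩ := h
    exact ⟨y, hy, y', hy', h⟩
  simp only [localDiffSetTotal, Set.mem_iUnion] at htF
  obtain ⟨x, -, u, v, hu, hv, huv, hux, hvx, hfr⟩ := htF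
  have hb1 : (1:ℝ) < b := by exact_mod_cast hb
  have hb0 : (0:ℝ) < b := by linarith
  set s : ℕ → ℝ := fun n => -Real.logb b |u n - v n| with hs
  have hpos : ∀ n, 0 < |u n - v n| := fun n => abs_pos.2 (sub_ne_zero.2 (huv n))
  have hround : Tendsto (fun n => s n - t - round (s n - t)) atTop (𝓝 0) := by
    have h1 := tendsto_iff_norm_sub_tendsto_zero.1 hfr
    rw [tendsto_zero_iff_norm_tendsto_zero]
    refine h1.congr fun n => ?_
    rw [fracPart, ← AddCircle.coe_sub, UnitAddCircle.norm_eq, Real.norm_eq_abs]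
  have hlim : Tendsto (fun n => (b : ℝ) ^ (round (s n - t)) * |u n - v n|) atTop
      (𝓝 ((b : ℝ) ^ (-t))) := by
    have h2 : Tendsto (fun n => (b : ℝ) ^ (-(s n - t - round (s n - t)) - t)) atTop
        (𝓝 ((b : ℝ) ^ (-0 - t))) :=
      ((Real.continuous_const_rpow hb0.ne').tendsto _).comp (hround.neg.sub_const t)
    simp only [neg_zero, zero_sub] at h2
    refine h2.congr fun n => ?_
    have h3 : |u n - v n| = (b : ℝ) ^ (-(s n)) := by
      rw [hs]
      simp only [neg_neg]
      exact (Real.rpow_logb hb0 hb1.ne' (hpos n)).symm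
    rw [h3, ← Real.rpow_intCast, ← Real.rpow_add hb0]
    congr 1
    ring
  have hsmall : ∀ᶠ n in atTop, |u n - v n| < (b : ℝ)⁻¹ := by
    have h4 : Tendsto (fun n => |u n - v n|) atTop (𝓝 0) := by
      simpa using (hux.sub hvx).abs
    exact h4.eventually_lt_const (inv_pos.2 hb0)
  refine (isClosed_diffMod hYc).mem_of_tendsto
    (((AddCircle.continuous_mk' (1:ℝ)).tendsto _).comp hlim) ?_
  filter_upwards [hsmall] with n hn
  have hs1 : 1 < s n := by
    have h5 := Real.logb_lt_logb hb1 (hpos n) hn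
    rw [Real.logb_inv, Real.logb_self_eq_one hb1] at h5
    simp only [hs]
    linarith
  have hk : 0 ≤ round (s n - t) := by
    rw [round_eq]
    exact Int.floor_nonneg.2 (by linarith)
  obtain ⟨k, hk⟩ := Int.eq_ofNat_of_zero_le hk
  have h6 := coe_pow_mul_sub_mem_diffMod hYinv (hu n) (hv n) k
  simp only [Function.comp_apply, hk, zpow_natCast]
  exact h6
end

section
/- Let b ≥ 2 be an integer and let Y ⊆ [0,1] be a closed T_b-invariant set. Then the Hausdorff dimension of F_{b,Y}(Y) is at most 2·dim Y, where dim Y is the Hausdorff dimension of Y. -/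
/-! Every small nonzero difference `u - v` of points of `Y` can be rescaled by a power `b ^ k`
so that its absolute value lies in `[1/b, 1]`, which leaves its `b`-adic fractional part unchanged.
By invariance the rescaled difference equals `T^k u - T^k v` up to an integer of absolute value at
most `2`, hence lies in the compact set `diffs Y = Y - Y + {-2, …, 2}`. As `fracPart b` is Lipschitz
on `{1/b ≤ |w| ≤ 1}`, the local difference set is contained in a Lipschitz image of a part of
`diffs Y` (`localDiffSetTotal_subset`), and it is enough to bound the dimension of `diffs Y`.

That bound comes from counting the level-`n` `b`-adic cells which meet `Y`. If there are `N_n`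
of them, the differences of two cells, translated by the integers `-2, …, 2`, cover
`diffs Y` by `5 N_n²` intervals of length `2 b^{-n}`, so it suffices that
`N_n ≤ C b^{sn}` for each `s > dim Y` (`dimH_diffs_le`). This is
Furstenberg's coincidence of Hausdorff and box dimension for invariant sets: compactness and
`μH[s] Y = 0` give a finite cover of `Y` by balls of radii at most `b^{-n_i}` with
`∑ 3 b^{-s n_i} ≤ 1` (`exists_adic_cover`); applying `T^{n_i}` on the `i`-th ball gives the
recursive inequality `N_n ≤ ∑ 3 N_{n - n_i}`, from which the growth bound follows by induction
(`card_cells_le`). -/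

open Filter Topology Set MeasureTheory ENNReal

/-! ### Adic cells and the digit expansion -/

/-- The indices `j` of the level-`n` `b`-adic cells `[j b^{-n}, (j+1) b^{-n})` which meet `Y`,
for `Y ⊆ [0,1]`. -/
noncomputable def cells (b : ℕ) (Y : Set ℝ) (n : ℕ) : Finset ℤ := by
  classical
  exact (Finset.Icc 0 ((b : ℤ) ^ n)).filter (fun j => ∃ y ∈ Y, ⌊(b : ℝ) ^ n * y⌋ = j)

/-- The set `Y - Y + {-2, -1, 0, 1, 2}`. -/
def diffs (Y : Set ℝ) : Set ℝ :=
  {w | ∃ x ∈ Y, ∃ y ∈ Y, ∃ m : ℤ, m ∈ Finset.Icc (-2 : ℤ) 2 ∧ w = x - y + m}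

lemma mem_cells {b : ℕ} {Y : Set ℝ} (hYsub : Y ⊆ Icc 0 1) {n : ℕ} {j : ℤ} :
    j ∈ cells b Y n ↔ ∃ y ∈ Y, ⌊(b : ℝ) ^ n * y⌋ = j := by
  classical
  unfold cells
  rw [Finset.mem_filter, Finset.mem_Icc]
  refine ⟨fun h => h.2, fun h => ⟨?_, h⟩⟩
  obtain ⟨y, hy, rfl⟩ := h
  have h01 := hYsub hy
  have hp : (0 : ℝ) ≤ (b : ℝ) ^ n := by positivity
  constructor
  · exact Int.floor_nonneg.2 (mul_nonneg hp h01.1)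
  · have : ((⌊(b : ℝ) ^ n * y⌋ : ℤ) : ℝ) ≤ ((b : ℤ) ^ n : ℤ) := by
      push_cast
      exact (Int.floor_le _).trans (mul_le_of_le_one_right hp h01.2)
    exact_mod_cast this

lemma card_cells_le_pow (b : ℕ) (Y : Set ℝ) (n : ℕ) : (cells b Y n).card ≤ b ^ n + 1 := by
  classical
  unfold cells
  refine (Finset.card_filter_le _ _).trans ?_
  rw [Int.card_Icc]
  have : ((b : ℤ) ^ n + 1 - 0).toNat = b ^ n + 1 := by
    have : ((b : ℤ) ^ n + 1 - 0) = ((b ^ n + 1 : ℕ) : ℤ) := by push_cast; ring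
    rw [this, Int.toNat_natCast]
  exact this.le

lemma Ta_iterate_succ (b : ℕ) (y : ℝ) (n : ℕ) :
    (Ta b)^[n + 1] y = Int.fract ((b : ℝ) ^ (n + 1) * y) := by
  induction n with
  | zero => simp [Ta]
  | succ n ih =>
    rw [Function.iterate_succ_apply', ih, Ta, Int.fract_eq_fract]
    refine ⟨-(b * ⌊(b : ℝ) ^ (n + 1) * y⌋), ?_⟩
    rw [Int.fract]
    push_cast
    ring

/-- The `b`-adic expansion to level `n` splits into the expansion to level `k` and the expansion
of the image under `T^k` to level `n - k`. For `k = 0` this fails at `y = 1`. -/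
lemma floor_split {b : ℕ} {y : ℝ} {n k : ℕ} (hk : 1 ≤ k) (hkn : k ≤ n) :
    ⌊(b : ℝ) ^ n * y⌋ =
      (b : ℤ) ^ (n - k) * ⌊(b : ℝ) ^ k * y⌋ + ⌊(b : ℝ) ^ (n - k) * (Ta b)^[k] y⌋ := by
  obtain ⟨k, rfl⟩ := Nat.exists_eq_add_of_le' hk
  rw [Ta_iterate_succ, ← Int.floor_intCast_add]
  congr 1
  rw [Int.fract]
  push_cast
  have : (b : ℝ) ^ n = (b : ℝ) ^ (n - (k + 1)) * (b : ℝ) ^ (k + 1) := by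
    rw [← pow_add, Nat.sub_add_cancel hkn]
  rw [this]
  ring

/-! ### Covers by adic balls -/

/-- A set of dimension less than `s` has countable covers by open balls whose radii have
arbitrarily small `s`-th power sums. -/
lemma exists_ball_cover {Y : Set ℝ} {s : NNReal} (hs : dimH Y < s) {η : ℝ} (hη : 0 < η) :
    ∃ (c ρ : ℕ → ℝ), (∀ n, 0 < ρ n) ∧ Y ⊆ ⋃ n, Metric.ball (c n) (ρ n) ∧
      ∀ F : Finset ℕ, ∑ n ∈ F, ρ n ^ (s : ℝ) ≤ η := by
  have hs0 : 0 < (s : ℝ) := by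
    have : (0 : ℝ≥0∞) < s := lt_of_le_of_lt zero_le hs
    exact_mod_cast this
  have h0 := hausdorffMeasure_of_dimH_lt hs
  rw [Measure.hausdorffMeasure_apply] at h0
  have hη2 : (0 : ℝ≥0∞) < ENNReal.ofReal (η / 2) := by simpa using hη
  have h1 := (ENNReal.iSup_eq_zero.1 (ENNReal.iSup_eq_zero.1 h0 1)) one_pos
  have h2 := h1.trans_lt hη2
  rw [iInf_lt_iff] at h2
  obtain ⟨t, h2⟩ := h2
  rw [iInf_lt_iff] at h2
  obtain ⟨ht, h2⟩ := h2
  rw [iInf_lt_iff] at h2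
  obtain ⟨-, h2⟩ := h2
  obtain ⟨ε, hε, hεs⟩ := ENNReal.exists_pos_sum_of_countable hη2.ne' ℕ
  -- Adding a positive summable `ε` to the `s`-th powers makes every radius positive, so that the
  -- sets `t n`, including empty sets and singletons, are enclosed in genuine open balls.
  set q : ℕ → ℝ≥0∞ := fun n => (⨆ _ : (t n).Nonempty, Metric.ediam (t n) ^ (s : ℝ)) + ε n with hq
  have hqs : ∑' n, q n < ENNReal.ofReal η := by
    rw [hq, ENNReal.tsum_add]
    refine (ENNReal.add_lt_add h2 hεs).trans_eq ?_
    rw [← ENNReal.ofReal_add (by positivity) (by positivity), add_halves]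
  have hqtop : ∀ n, q n ≠ ⊤ := fun n =>
    ((ENNReal.le_tsum n).trans_lt (hqs.trans ENNReal.ofReal_lt_top)).ne
  have hq0 : ∀ n, 0 < q n := fun n =>
    lt_of_lt_of_le (by exact_mod_cast hε n) (le_add_self : (ε n : ℝ≥0∞) ≤ q n)
  have hqr : ∀ n, 0 < (q n).toReal := fun n => ENNReal.toReal_pos (hq0 n).ne' (hqtop n)
  classical
  refine ⟨fun n => if h : (t n).Nonempty then h.some else 0,
    fun n => (q n).toReal ^ (s : ℝ)⁻¹, fun n => Real.rpow_pos_of_pos (hqr n) _, ?_, ?_⟩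
  · intro y hy
    obtain ⟨n, hn⟩ := mem_iUnion.1 (ht hy)
    refine mem_iUnion.2 ⟨n, ?_⟩
    have hne : (t n).Nonempty := ⟨y, hn⟩
    simp only [hne, dite_true, Metric.mem_ball]
    have hd : edist y hne.some ≤ Metric.ediam (t n) :=
      Metric.edist_le_ediam_of_mem hn hne.some_mem
    have hlt : edist y hne.some ^ (s : ℝ) < q n := by
      have e : q n = Metric.ediam (t n) ^ (s : ℝ) + ε n := by simp [hq, hne]
      have hle := ENNReal.rpow_le_rpow hd hs0.le
      have hfin : edist y hne.some ^ (s : ℝ) ≠ ⊤ :=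
        ENNReal.rpow_ne_top_of_nonneg hs0.le (edist_ne_top _ _)
      calc edist y hne.some ^ (s : ℝ) < edist y hne.some ^ (s : ℝ) + ε n :=
            ENNReal.lt_add_right hfin (by exact_mod_cast (hε n).ne')
        _ ≤ _ := by rw [e]; gcongr
    have h3 : dist y hne.some ^ (s : ℝ) < (q n).toReal := by
      rw [dist_edist, ENNReal.toReal_rpow]
      exact (ENNReal.toReal_lt_toReal hlt.ne_top (hqtop n)).2 hlt
    exact (Real.lt_rpow_inv_iff_of_pos dist_nonneg (hqr n).le hs0).2 h3
  · intro F
    have e : ∀ n, ((q n).toReal ^ (s : ℝ)⁻¹) ^ (s : ℝ) = (q n).toReal := fun n =>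
      Real.rpow_inv_rpow (hqr n).le hs0.ne'
    simp only [e]
    rw [← ENNReal.toReal_sum (fun n _ => hqtop n)]
    exact ENNReal.toReal_le_of_le_ofReal hη.le ((ENNReal.sum_le_tsum F).trans hqs.le)

/-- Compactness turns the cover by balls into a finite cover with `b`-adic radii. The bound `1/3`
leaves room for the three adjacent cells that a ball of radius `b^{-n}` can meet. -/
lemma exists_adic_cover {b : ℕ} (hb : 2 ≤ b) {Y : Set ℝ} (hYc : IsCompact Y) {s : NNReal}
    (hs : dimH Y < s) :
    ∃ (F : Finset ℕ) (c : ℕ → ℝ) (k : ℕ → ℕ), (∀ i ∈ F, 1 ≤ k i) ∧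
      (∀ y ∈ Y, ∃ i ∈ F, |(b : ℝ) ^ k i * y - (b : ℝ) ^ k i * c i| < 1) ∧
      ∑ i ∈ F, (((b : ℝ) ^ (s : ℝ))⁻¹) ^ k i ≤ 1 / 3 := by
  have hs0 : 0 < (s : ℝ) := by
    have : (0 : ℝ≥0∞) < s := lt_of_le_of_lt zero_le hs
    exact_mod_cast this
  have hb1 : (1 : ℝ) < b := by exact_mod_cast hb
  have hb0 : (0 : ℝ) < b := by positivity
  set β : ℝ := (b : ℝ) ^ (s : ℝ) with hβ
  have hβ0 : 0 < β := Real.rpow_pos_of_pos hb0 _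
  obtain ⟨c, ρ, hρ, hcov, hsum⟩ := exists_ball_cover hs (η := β⁻¹ / 3) (by positivity)
  have hinv : ∀ n : ℕ, (((b : ℝ)⁻¹) ^ n) ^ (s : ℝ) = (β⁻¹) ^ n := by
    intro n
    rw [hβ, ← Real.inv_rpow hb0.le, ← Real.rpow_natCast, ← Real.rpow_natCast,
      ← Real.rpow_mul (by positivity), ← Real.rpow_mul (by positivity), mul_comm]
  have hρb : ∀ n, ρ n < (b : ℝ)⁻¹ := by
    intro n
    have h1 : ρ n ^ (s : ℝ) ≤ β⁻¹ / 3 := by simpa using hsum {n}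
    have h2 : ρ n ^ (s : ℝ) < ((b : ℝ)⁻¹) ^ (s : ℝ) := by
      have := hinv 1
      rw [pow_one, pow_one] at this
      rw [this]
      have : 0 < β⁻¹ := by positivity
      linarith
    exact (Real.rpow_lt_rpow_iff (hρ n).le (by positivity) hs0).1 h2
  have hbi : (b : ℝ)⁻¹ < 1 := inv_lt_one_of_one_lt₀ hb1
  choose k hk1 hk2 using fun n =>
    exists_nat_pow_near_of_lt_one (hρ n) ((hρb n).trans hbi).le (inv_pos.2 hb0) hbi
  obtain ⟨F, hF⟩ := hYc.elim_finite_subcover _ (fun n => Metric.isOpen_ball) hcov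
  refine ⟨F, c, k, ?_, ?_, ?_⟩
  · intro i _
    by_contra h
    have h0 : k i = 0 := by omega
    have := hk1 i
    rw [h0, zero_add, pow_one] at this
    exact absurd (hρb i) this.le.not_gt
  · intro y hy
    obtain ⟨i, hi, hyi⟩ := mem_iUnion₂.1 (hF hy)
    refine ⟨i, hi, ?_⟩
    have hp : (0 : ℝ) < (b : ℝ) ^ k i := by positivity
    have h := (Metric.mem_ball.1 hyi).trans_le (hk2 i)
    rw [Real.dist_eq, inv_pow] at h
    rw [← mul_sub, abs_mul, abs_of_pos hp]
    calc (b : ℝ) ^ k i * |y - c i| < (b : ℝ) ^ k i * ((b : ℝ) ^ k i)⁻¹ := by gcongr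
      _ = 1 := mul_inv_cancel₀ hp.ne'
  · have h : ∀ i ∈ F, (β⁻¹) ^ k i ≤ β * ρ i ^ (s : ℝ) := by
      intro i _
      have h1 := Real.rpow_le_rpow (by positivity) (hk1 i).le hs0.le
      rw [hinv, pow_succ] at h1
      calc (β⁻¹) ^ k i = β * ((β⁻¹) ^ k i * β⁻¹) := by field_simp
        _ ≤ _ := by gcongr
    calc _ ≤ ∑ i ∈ F, β * ρ i ^ (s : ℝ) := Finset.sum_le_sum h
      _ = β * ∑ i ∈ F, ρ i ^ (s : ℝ) := by rw [Finset.mul_sum]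
      _ ≤ β * (β⁻¹ / 3) := by gcongr; exact hsum F
      _ = 1 / 3 := by field_simp

/-! ### Growth of the number of cells -/

/-- The number of level-`n` cells meeting an invariant set `Y` grows at most like `b^{sn}` for every
`s > dim Y`: the upper box dimension of `Y` is at most its Hausdorff dimension. -/
lemma card_cells_le {b : ℕ} (hb : 2 ≤ b) {Y : Set ℝ} (hYsub : Y ⊆ Icc 0 1) (hYc : IsCompact Y)
    (hYinv : MapsTo (Ta b) Y Y) {s : NNReal} (hs : dimH Y < s) :
    ∃ C : ℝ, 0 ≤ C ∧ ∀ n, ((cells b Y n).card : ℝ) ≤ C * ((b : ℝ) ^ (s : ℝ)) ^ n := by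
  classical
  obtain ⟨F, c, k, hk, hcov, hsum⟩ := exists_adic_cover hb hYc hs
  have hb1 : (1 : ℝ) ≤ b := by exact_mod_cast (by omega : 1 ≤ b)
  set β : ℝ := (b : ℝ) ^ (s : ℝ) with hβ
  have hβ1 : 1 ≤ β := Real.one_le_rpow hb1 s.2
  have hβ0 : 0 < β := by positivity
  set L := F.sup k
  have hC : (0 : ℝ) ≤ (b : ℝ) ^ L + 1 := by positivity
  refine ⟨(b : ℝ) ^ L + 1, hC, fun n => ?_⟩
  induction n using Nat.strong_induction_on with
  | _ n ih =>
  by_cases hn : n < L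
  · calc ((cells b Y n).card : ℝ) ≤ (b : ℝ) ^ n + 1 := by exact_mod_cast card_cells_le_pow b Y n
      _ ≤ (b : ℝ) ^ L + 1 := by gcongr
      _ ≤ _ := le_mul_of_one_le_right hC (one_le_pow₀ hβ1)
  · have hkn : ∀ i ∈ F, k i ≤ n := fun i hi => (Finset.le_sup hi).trans (not_lt.1 hn)
    have hsub : cells b Y n ⊆ F.biUnion fun i => (Finset.Icc (-1 : ℤ) 1).biUnion fun e =>
        (cells b Y (n - k i)).image
          fun a => (b : ℤ) ^ (n - k i) * (⌊(b : ℝ) ^ k i * c i⌋ + e) + a := by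
      intro j hj
      obtain ⟨y, hy, rfl⟩ := (mem_cells hYsub).1 hj
      obtain ⟨i, hi, hyi⟩ := hcov y hy
      simp only [Finset.mem_biUnion, Finset.mem_image]
      refine ⟨i, hi, ⌊(b : ℝ) ^ k i * y⌋ - ⌊(b : ℝ) ^ k i * c i⌋, ?_,
        ⌊(b : ℝ) ^ (n - k i) * (Ta b)^[k i] y⌋, ?_, ?_⟩
      · rw [abs_lt] at hyi
        have h1 := Int.floor_le ((b : ℝ) ^ k i * y)
        have h2 := Int.lt_floor_add_one ((b : ℝ) ^ k i * y)
        have h3 := Int.floor_le ((b : ℝ) ^ k i * c i)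
        have h4 := Int.lt_floor_add_one ((b : ℝ) ^ k i * c i)
        have h5 : ((⌊(b : ℝ) ^ k i * y⌋ - ⌊(b : ℝ) ^ k i * c i⌋ : ℤ) : ℝ) < (2 : ℤ) := by
          push_cast; linarith
        have h6 : ((-2 : ℤ) : ℝ) < ((⌊(b : ℝ) ^ k i * y⌋ - ⌊(b : ℝ) ^ k i * c i⌋ : ℤ) : ℝ) := by
          push_cast; linarith
        rw [Int.cast_lt] at h5 h6
        rw [Finset.mem_Icc]
        omega
      · exact (mem_cells hYsub).2 ⟨_, hYinv.iterate _ hy, rfl⟩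
      · rw [floor_split (hk i hi) (hkn i hi)]
        ring
    -- The factor 3 counts the neighbouring cells `e = -1, 0, 1` of the cell of the centre `c i`.
    have hcard : (cells b Y n).card ≤ ∑ i ∈ F, 3 * (cells b Y (n - k i)).card := by
      refine (Finset.card_le_card hsub).trans (Finset.card_biUnion_le.trans ?_)
      refine Finset.sum_le_sum fun i _ => ?_
      refine (Finset.card_biUnion_le_card_mul _ _ _ fun e _ => Finset.card_image_le).trans ?_
      simp
    calc ((cells b Y n).card : ℝ) ≤ ∑ i ∈ F, 3 * ((cells b Y (n - k i)).card : ℝ) := by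
          exact_mod_cast hcard
      _ ≤ ∑ i ∈ F, 3 * (((b : ℝ) ^ L + 1) * (β ^ n * (β⁻¹) ^ k i)) := by
          refine Finset.sum_le_sum fun i hi => ?_
          have h := ih (n - k i) (by have := hk i hi; have := hkn i hi; omega)
          have e : β ^ (n - k i) = β ^ n * (β⁻¹) ^ k i := by
            rw [pow_sub₀ _ hβ0.ne' (hkn i hi), inv_pow]
          rw [e] at h
          linarith
      _ = ((b : ℝ) ^ L + 1) * β ^ n * (3 * ∑ i ∈ F, (β⁻¹) ^ k i) := by
          rw [Finset.mul_sum, Finset.mul_sum]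
          exact Finset.sum_congr rfl fun i _ => by ring
      _ ≤ ((b : ℝ) ^ L + 1) * β ^ n * 1 := by
          gcongr
          linarith
      _ = _ := mul_one _

/-! ### The difference set -/

lemma dimH_diffs_le {b : ℕ} (hb : 2 ≤ b) {Y : Set ℝ} (hYsub : Y ⊆ Icc 0 1) (hYc : IsCompact Y)
    (hYinv : MapsTo (Ta b) Y Y) {s : NNReal} (hs : dimH Y < s) :
    dimH (diffs Y) ≤ ((2 * s : NNReal) : ℝ≥0∞) := by
  obtain ⟨C, hC, hN⟩ := card_cells_le hb hYsub hYc hYinv hs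
  have hb1 : (1 : ℝ) < b := by exact_mod_cast hb
  have hb0 : (0 : ℝ) < b := by positivity
  set β : ℝ := (b : ℝ) ^ (s : ℝ) with hβ
  have hβ0 : 0 < β := Real.rpow_pos_of_pos hb0 _
  apply dimH_le_of_hausdorffMeasure_ne_top
  let t : ∀ n : ℕ, (cells b Y n × cells b Y n × Finset.Icc (-2 : ℤ) 2) → Set ℝ := fun n p =>
    Icc ((((p.1 : ℤ) : ℝ) - (p.2.1 : ℤ) - 1) / (b : ℝ) ^ n + (p.2.2 : ℤ))
      ((((p.1 : ℤ) : ℝ) - (p.2.1 : ℤ) + 1) / (b : ℝ) ^ n + (p.2.2 : ℤ))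
  have hdiam : ∀ n p, Metric.ediam (t n p) = ENNReal.ofReal (2 * ((b : ℝ)⁻¹) ^ n) := by
    intro n p
    simp only [t]
    rw [Real.ediam_Icc]
    congr 1
    rw [inv_pow]
    field_simp
    ring
  have hr : Tendsto (fun n : ℕ => ENNReal.ofReal (2 * ((b : ℝ)⁻¹) ^ n)) atTop (𝓝 0) := by
    have h := (tendsto_pow_atTop_nhds_zero_of_lt_one (inv_nonneg.2 hb0.le)
      (inv_lt_one_of_one_lt₀ hb1)).const_mul 2
    have := ENNReal.tendsto_ofReal h
    simpa using this
  have hcov : ∀ n, diffs Y ⊆ ⋃ p, t n p := by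
    rintro n w ⟨x, hx, y, hy, m, hm, rfl⟩
    refine mem_iUnion.2 ⟨⟨⟨_, (mem_cells hYsub).2 ⟨x, hx, rfl⟩⟩,
      ⟨_, (mem_cells hYsub).2 ⟨y, hy, rfl⟩⟩, ⟨m, hm⟩⟩, ?_⟩
    have hp : (0 : ℝ) < (b : ℝ) ^ n := by positivity
    have h1 := Int.floor_le ((b : ℝ) ^ n * x)
    have h2 := Int.lt_floor_add_one ((b : ℝ) ^ n * x)
    have h3 := Int.floor_le ((b : ℝ) ^ n * y)
    have h4 := Int.lt_floor_add_one ((b : ℝ) ^ n * y)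
    simp only [t, mem_Icc, add_le_add_iff_right]
    rw [div_le_iff₀ hp, le_div_iff₀ hp]
    constructor <;> nlinarith
  have hle := Measure.hausdorffMeasure_le_liminf_sum ((2 * s : NNReal) : ℝ) (diffs Y) _ hr t
    (Eventually.of_forall fun n p => (hdiam n p).le) (Eventually.of_forall hcov)
  -- The factors `b^{2sn}` from the count and `b^{-2sn}` from the diameters cancel.
  have hbound : ∀ n, ∑ p, Metric.ediam (t n p) ^ ((2 * s : NNReal) : ℝ) ≤
      ENNReal.ofReal (5 * C ^ 2 * 2 ^ (2 * (s : ℝ))) := by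
    intro n
    simp only [hdiam]
    rw [Finset.sum_const, ENNReal.ofReal_rpow_of_nonneg (by positivity) (by positivity),
      nsmul_eq_mul, ← ENNReal.ofReal_natCast, ← ENNReal.ofReal_mul (by positivity)]
    apply ENNReal.ofReal_le_ofReal
    have hcard : ((Finset.univ : Finset (cells b Y n × cells b Y n × Finset.Icc (-2 : ℤ) 2)).card
        : ℝ) = (cells b Y n).card * (cells b Y n).card * 5 := by
      rw [Finset.card_univ, Fintype.card_prod, Fintype.card_prod]
      simp only [Fintype.card_coe, Int.card_Icc]
      push_cast
      ring
    have hpow : (2 * ((b : ℝ)⁻¹) ^ n) ^ ((2 * s : NNReal) : ℝ) =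
        2 ^ (2 * (s : ℝ)) * ((β ^ n) ^ 2)⁻¹ := by
      rw [Real.mul_rpow (by norm_num) (by positivity)]
      push_cast
      congr 1
      rw [hβ, inv_pow, Real.inv_rpow (by positivity)]
      congr 1
      rw [← Real.rpow_natCast, ← Real.rpow_natCast, ← Real.rpow_natCast,
        ← Real.rpow_mul hb0.le, ← Real.rpow_mul hb0.le, ← Real.rpow_mul hb0.le]
      congr 1
      push_cast
      ring
    rw [hcard, hpow]
    have h := hN n
    have hβn : 0 < β ^ n := by positivity
    calc _ ≤ (C * β ^ n) * (C * β ^ n) * 5 * (2 ^ (2 * (s : ℝ)) * ((β ^ n) ^ 2)⁻¹) := by gcongr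
      _ = _ := by field_simp
  have hfin : liminf (fun n => ∑ p, Metric.ediam (t n p) ^ ((2 * s : NNReal) : ℝ)) atTop ≤
      ENNReal.ofReal (5 * C ^ 2 * 2 ^ (2 * (s : ℝ))) :=
    (liminf_le_liminf (Eventually.of_forall hbound)).trans_eq (liminf_const _)
  exact ((hle.trans hfin).trans_lt ENNReal.ofReal_lt_top).ne

lemma isCompact_diffs {Y : Set ℝ} (hYc : IsCompact Y) : IsCompact (diffs Y) := by
  have hI : IsCompact ((Finset.Icc (-2 : ℤ) 2 : Finset ℤ) : Set ℤ) :=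
    (Finset.finite_toSet _).isCompact
  have hf : Continuous (fun p : ℝ × ℝ × ℤ => p.1 - p.2.1 + (p.2.2 : ℝ)) := by
    have : Continuous (fun m : ℤ => (m : ℝ)) := continuous_of_discreteTopology
    fun_prop
  convert (hYc.prod (hYc.prod hI)).image hf using 1
  ext w
  constructor
  · rintro ⟨x, hx, y, hy, m, hm, rfl⟩
    exact ⟨(x, y, m), ⟨hx, hy, hm⟩, rfl⟩
  · rintro ⟨⟨x, y, m⟩, ⟨hx, hy, hm⟩, rfl⟩
    exact ⟨x, hx, y, hy, m, hm, rfl⟩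

/-! ### Fractional parts of differences -/

lemma abs_log_sub_le {a x y : ℝ} (ha : 0 < a) (hx : a ≤ x) (hy : a ≤ y) :
    |Real.log x - Real.log y| ≤ a⁻¹ * |x - y| := by
  wlog h : y ≤ x generalizing x y
  · rw [abs_sub_comm, abs_sub_comm x]
    exact this hy hx (le_of_not_ge h)
  have hy0 : 0 < y := ha.trans_le hy
  have hx0 : 0 < x := ha.trans_le hx
  rw [abs_of_nonneg (sub_nonneg.2 (Real.log_le_log hy0 h)), abs_of_nonneg (sub_nonneg.2 h),
    ← Real.log_div hx0.ne' hy0.ne']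
  calc Real.log (x / y) ≤ x / y - 1 := Real.log_le_sub_one_of_pos (by positivity)
    _ = y⁻¹ * (x - y) := by field_simp
    _ ≤ a⁻¹ * (x - y) := by gcongr

lemma fracPart_lipschitzOn {b : ℕ} (hb : 2 ≤ b) :
    ∃ K, LipschitzOnWith K (fracPart b) {w : ℝ | (b : ℝ)⁻¹ ≤ |w|} := by
  have hb1 : (1 : ℝ) < b := by exact_mod_cast hb
  have hb0 : (0 : ℝ) < b := by positivity
  have hl : 0 < Real.log b := Real.log_pos hb1
  refine ⟨(b / Real.log b).toNNReal, LipschitzOnWith.of_dist_le_mul fun x hx y hy => ?_⟩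
  rw [Real.coe_toNNReal _ (by positivity), dist_eq_norm, Real.dist_eq]
  have h1 : fracPart b x - fracPart b y =
      ((Real.logb b |y| - Real.logb b |x| : ℝ) : AddCircle (1 : ℝ)) := by
    unfold fracPart
    rw [← AddCircle.coe_sub]
    congr 1
    ring
  rw [h1]
  refine QuotientAddGroup.norm_mk_le_norm.trans ?_
  rw [Real.norm_eq_abs, Real.logb, Real.logb, ← sub_div, abs_div, abs_of_pos hl, abs_sub_comm,
    div_le_iff₀ hl]
  refine (abs_log_sub_le (inv_pos.2 hb0) hx hy).trans ?_
  rw [inv_inv]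
  calc (b : ℝ) * |(|x| - |y|)| ≤ b * |x - y| :=
        mul_le_mul_of_nonneg_left (abs_abs_sub_abs_le x y) hb0.le
    _ = _ := by field_simp

lemma Ta_iterate_eq (b : ℕ) (y : ℝ) (k : ℕ) :
    ∃ m : ℤ, (Ta b)^[k] y = (b : ℝ) ^ k * y + m := by
  cases k with
  | zero => exact ⟨0, by simp⟩
  | succ k => exact ⟨-⌊(b : ℝ) ^ (k + 1) * y⌋, by
      rw [Ta_iterate_succ, Int.fract]; push_cast; ring⟩

lemma fracPart_pow_mul {b : ℕ} (hb : 2 ≤ b) (k : ℕ) {w : ℝ} (hw : w ≠ 0) :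
    fracPart b ((b : ℝ) ^ k * w) = fracPart b w := by
  have hb1 : (1 : ℝ) < b := by exact_mod_cast hb
  have hb0 : (0 : ℝ) < b := by positivity
  unfold fracPart
  rw [abs_mul, abs_of_pos (by positivity : (0 : ℝ) < (b : ℝ) ^ k),
    Real.logb_mul (by positivity) (abs_ne_zero.2 hw), Real.logb_pow, Real.logb_self_eq_one hb1]
  rw [← sub_eq_zero, ← AddCircle.coe_sub, AddCircle.coe_eq_zero_iff]
  exact ⟨-k, by simp⟩

/-- The rescaling step: `b^k (u - v)` differs from `T^k u - T^k v` by an integer. -/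
lemma fracPart_mem_image {b : ℕ} (hb : 2 ≤ b) {Y : Set ℝ} (hYsub : Y ⊆ Icc 0 1)
    (hYinv : MapsTo (Ta b) Y Y) {u v : ℝ} (hu : u ∈ Y) (hv : v ∈ Y) (huv : u ≠ v) :
    fracPart b (u - v) ∈ fracPart b '' (diffs Y ∩ {w | (b : ℝ)⁻¹ ≤ |w|}) := by
  have hb1 : (1 : ℝ) < b := by exact_mod_cast hb
  have hb0 : (0 : ℝ) < b := by positivity
  have hne : u - v ≠ 0 := sub_ne_zero.2 huv
  have hu1 := hYsub hu
  have hv1 := hYsub hv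
  obtain ⟨k, hk1, hk2⟩ := exists_nat_pow_near_of_lt_one (abs_pos.2 hne)
    (abs_le.2 ⟨by linarith [hu1.1, hv1.2], by linarith [hu1.2, hv1.1]⟩)
    (inv_pos.2 hb0) (inv_lt_one_of_one_lt₀ hb1)
  have hp : (0 : ℝ) < (b : ℝ) ^ k := by positivity
  have habs : |(b : ℝ) ^ k * (u - v)| = (b : ℝ) ^ k * |u - v| := by
    rw [abs_mul, abs_of_pos hp]
  have hcancel : (b : ℝ) ^ k * ((b : ℝ)⁻¹) ^ k = 1 := by
    rw [← mul_pow, mul_inv_cancel₀ hb0.ne', one_pow]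
  have hle1 : |(b : ℝ) ^ k * (u - v)| ≤ 1 := by
    rw [habs, ← hcancel]; gcongr
  refine ⟨(b : ℝ) ^ k * (u - v), ⟨?_, ?_⟩, fracPart_pow_mul hb k hne⟩
  · obtain ⟨m, hm⟩ := Ta_iterate_eq b u k
    obtain ⟨l, hl⟩ := Ta_iterate_eq b v k
    have hu2 := hYinv.iterate k hu
    have hv2 := hYinv.iterate k hv
    refine ⟨_, hu2, _, hv2, l - m, ?_, ?_⟩
    · have hu3 := hYsub hu2
      have hv3 := hYsub hv2
      rw [hm] at hu3
      rw [hl] at hv3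
      rw [abs_le] at hle1
      have h5 : ((l - m : ℤ) : ℝ) ≤ (2 : ℤ) := by
        push_cast; linarith [hu3.1, hv3.2]
      have h6 : ((-2 : ℤ) : ℝ) ≤ ((l - m : ℤ) : ℝ) := by
        push_cast; linarith [hu3.2, hv3.1]
      rw [Int.cast_le] at h5 h6
      exact Finset.mem_Icc.2 ⟨h6, h5⟩
    · rw [hm, hl]
      push_cast
      ring
  · rw [mem_ofPred_eq, habs]
    calc (b : ℝ)⁻¹ = (b : ℝ) ^ k * ((b : ℝ)⁻¹) ^ (k + 1) := by
          rw [pow_succ, ← mul_assoc, hcancel, one_mul]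
      _ ≤ _ := by gcongr

lemma localDiffSetTotal_subset {b : ℕ} (hb : 2 ≤ b) {Y : Set ℝ} (hYsub : Y ⊆ Icc 0 1)
    (hYc : IsCompact Y) (hYinv : MapsTo (Ta b) Y Y) :
    localDiffSetTotal b Y ⊆ fracPart b '' (diffs Y ∩ {w | (b : ℝ)⁻¹ ≤ |w|}) := by
  intro t ht
  obtain ⟨x, -, u, v, hu, hv, huv, -, -, hlim⟩ := mem_iUnion₂.1 ht
  obtain ⟨K, hK⟩ := fracPart_lipschitzOn hb
  have hcl : IsClosed {w : ℝ | (b : ℝ)⁻¹ ≤ |w|} := isClosed_le continuous_const continuous_abs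
  have hcomp : IsCompact (fracPart b '' (diffs Y ∩ {w | (b : ℝ)⁻¹ ≤ |w|})) :=
    ((isCompact_diffs hYc).inter_right hcl).image_of_continuousOn
      (hK.continuousOn.mono inter_subset_right)
  exact hcomp.isClosed.mem_of_tendsto hlim
    (Eventually.of_forall fun n => fracPart_mem_image hb hYsub hYinv (hu n) (hv n) (huv n))

/-- **Proposition 3.1, second part.** If `Y ⊆ [0,1]` is closed and `T_b`-invariant, then
`dim F_{b,Y}(Y) ≤ 2 dim Y`. -/
theorem dimH_localDiffSetTotal_le
    (b : ℕ) (hb : 2 ≤ b) (Y : Set ℝ) (hYsub : Y ⊆ Set.Icc 0 1) (hYcl : IsClosed Y)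
    (hYinv : Set.MapsTo (Ta b) Y Y) :
    dimH (localDiffSetTotal b Y) ≤ 2 * dimH Y := by
  have hYc : IsCompact Y := isCompact_Icc.of_isClosed_subset hYcl hYsub
  obtain ⟨K, hK⟩ := fracPart_lipschitzOn hb
  have h1 : dimH (localDiffSetTotal b Y) ≤ dimH (diffs Y) :=
    (dimH_mono (localDiffSetTotal_subset hb hYsub hYc hYinv)).trans
      ((hK.mono inter_subset_right).dimH_image_le.trans (dimH_mono inter_subset_left))
  refine h1.trans ?_
  rw [mul_comm, ← ENNReal.div_le_iff two_ne_zero ENNReal.ofNat_ne_top]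
  refine le_of_forall_gt fun c hc => ?_
  obtain ⟨s, hs, hsc⟩ := ENNReal.lt_iff_exists_nnreal_btwn.1 hc
  refine lt_of_le_of_lt ?_ hsc
  rw [ENNReal.div_le_iff two_ne_zero ENNReal.ofNat_ne_top, mul_comm]
  exact_mod_cast dimH_diffs_le hb hYsub hYc hYinv hs
end

section
/- Let b ≥ 2 be an integer, let X ⊆ ℝ, let f : ℝ → ℝ be a C²-diffeomorphism, and set Y = f(X). Then dim F_{b,Y}(Y) ≥ dim F_{b,X}(X) − bdim X, where dim denotes Hausdorff dimension and bdim denotes upper box (Minkowski) dimension. -/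
/-! For `x ∈ X`, the difference quotients of `f` near `x` converge to `f' x`, so `f` translates
`F_{b,X}(x)` into `F_{b,Y}(f x)` by `{f' x}_b` (`add_fracPart_mem_localDiffSet`). Hence
`F_{b,X}(X)` is contained in `{a - g x : a ∈ F_{b,Y}(Y), x ∈ X}` with `g x = {f' x}_b`.

If `bdim X` is infinite there is nothing to prove. Otherwise `X` is bounded, so `g` is Lipschitz on
`X` because `f` is `C²` with nonvanishing derivative, and the result follows from
`dim {a - g x : a ∈ A, x ∈ X} ≤ dim A + bdim X` (`dimH_image2_sub_le`): given a fine cover of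
`A` by sets of diameter `d_i` with `∑ d_i ^ σ ≤ 2`, cover `X` by at most `d_i ^ (-t)` balls of
radius `d_i`; the resulting pieces of the difference set have diameter at most `K d_i`, and
`∑ d_i ^ (-t) (K d_i) ^ (σ + t) ≤ 2 K ^ (σ + t)`. -/


open Filter Topology Set MeasureTheory ENNReal

/-! ### Box-counting covers -/

/-- Below the scale `δ`, a set of upper box dimension `< t` is covered by at most `r ^ (-t)` balls
of radius `r`. -/
lemma exists_cover_of_upperBoxDim_lt {X : Set ℝ} {t : NNReal} (h : upperBoxDim X < t) :
    ∃ δ : NNReal, 0 < δ ∧ ∀ r : NNReal, 0 < r → r < δ → ∃ s : Finset ℝ,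
      X ⊆ ⋃ c ∈ s, Metric.ball c r ∧ (s.card : NNReal) ≤ r ^ (-(t : ℝ)) := by
  have h1 := eventually_lt_of_limsup_lt h
  rw [eventually_nhdsWithin_iff, Metric.eventually_nhds_iff] at h1
  obtain ⟨ε, hε, H⟩ := h1
  refine ⟨min ⟨ε, hε.le⟩ 1, lt_min hε one_pos, fun r hr hrδ => ?_⟩
  have hrε : (r : ℝ) < ε := (lt_min_iff.1 hrδ).1
  have hr1 : (r : ℝ) < 1 := (lt_min_iff.1 hrδ).2
  have hr0 : (0 : ℝ) < r := hr
  have H' := @H r (by simpa [Real.dist_eq] using hrε) hr0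
  split_ifs at H' with hN
  · exact absurd H' (by simp)
  have hlog : 0 < Real.log (1 / (r : ℝ)) := Real.log_pos (by rw [lt_div_iff₀ hr0]; simpa using hr1)
  have hlt : Real.log (coveringNumber r X).toReal / Real.log (1 / (r : ℝ)) < t := by
    by_contra hcon
    push Not at hcon
    have := ENNReal.ofReal_le_ofReal hcon
    rw [ENNReal.ofReal_coe_nnreal] at this
    exact absurd H' (not_lt.2 this)
  rw [div_lt_iff₀ hlog] at hlt
  have hpos : (0 : ℝ) < (r : ℝ) ^ (-(t : ℝ)) := Real.rpow_pos_of_pos hr0 _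
  have hNlt : (coveringNumber r X).toReal < (r : ℝ) ^ (-(t : ℝ)) := by
    rcases (ENNReal.toReal_nonneg (a := coveringNumber r X)).eq_or_lt with h0 | h0
    · rw [← h0]; exact hpos
    · rw [← Real.log_lt_log_iff h0 hpos, Real.log_rpow hr0]
      simpa [Real.log_inv] using hlt
  have hNlt' : coveringNumber r X < ((r ^ (-(t : ℝ)) : NNReal) : ℝ≥0∞) := by
    rw [← ENNReal.toReal_lt_toReal hN ENNReal.coe_ne_top]
    simpa using hNlt
  unfold coveringNumber at hNlt'
  rw [iInf_lt_iff] at hNlt'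
  obtain ⟨s, hs⟩ := hNlt'
  rw [iInf_lt_iff] at hs
  obtain ⟨hs1, hs2⟩ := hs
  refine ⟨s, hs1, ?_⟩
  exact_mod_cast hs2.le

lemma isBounded_of_upperBoxDim_ne_top {X : Set ℝ} (h : upperBoxDim X ≠ ⊤) :
    Bornology.IsBounded X := by
  obtain ⟨t, ht, -⟩ := ENNReal.lt_iff_exists_nnreal_btwn.1 (lt_top_iff_ne_top.2 h)
  obtain ⟨δ, hδ, H⟩ := exists_cover_of_upperBoxDim_lt ht
  obtain ⟨s, hs, -⟩ := H (δ / 2) (half_pos hδ) (half_lt_self hδ)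
  exact ((Bornology.isBounded_biUnion_finset s).2 fun c _ => Metric.isBounded_ball).subset hs

/-! ### Dimension of a difference set -/

/-- A set of dimension `< σ` has arbitrarily fine countable covers with `∑ d_i ^ σ ≤ 2`, where
`d_i` bounds the diameter of the `i`-th piece. The `d_i` are strictly positive even when the pieces
are singletons, so they can serve as radii of balls. -/
lemma exists_fine_cover_of_dimH_lt {E : Type*} [MetricSpace E] {A : Set E} {σ : NNReal}
    (hA : dimH A < σ) {ρ : NNReal} (hρ : 0 < ρ) :
    ∃ (U : ℕ → Set E) (d : ℕ → NNReal), A ⊆ ⋃ i, U i ∧ (∀ i, 0 < d i ∧ d i ≤ ρ) ∧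
      (∀ i, Metric.ediam (U i) ≤ d i) ∧ ∑' i, (d i : ℝ≥0∞) ^ (σ : ℝ) ≤ 2 := by
  borelize E
  have hσ : (0 : ℝ) < σ := by
    have : (0 : ℝ≥0∞) < σ := bot_le.trans_lt hA
    exact_mod_cast this
  have h0 := hausdorffMeasure_of_dimH_lt hA
  rw [Measure.hausdorffMeasure_apply] at h0
  have h1 := h0.le
  rw [iSup₂_le_iff] at h1
  have h2 := (h1 ρ (by exact_mod_cast hρ)).trans_lt one_pos
  simp only [iInf_lt_iff] at h2
  obtain ⟨U, hU, hUd, hsum⟩ := h2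
  have hη : (min 1 (ρ ^ (σ : ℝ)) : NNReal) ≠ 0 := (lt_min one_pos (NNReal.rpow_pos hρ)).ne'
  obtain ⟨e, he, hesum⟩ := ENNReal.exists_pos_sum_of_countable (ENNReal.coe_ne_zero.2 hη) ℕ
  have hne : ∀ i, Metric.ediam (U i) ≠ ⊤ := fun i => ((hUd i).trans_lt ENNReal.coe_lt_top).ne
  refine ⟨U, fun i => max (Metric.ediam (U i)).toNNReal (e i ^ (σ : ℝ)⁻¹), hU, fun i => ⟨?_, ?_⟩,
    fun i => ?_, ?_⟩
  · exact lt_max_of_lt_right (NNReal.rpow_pos (he i))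
  · refine max_le ?_ ?_
    · exact (ENNReal.toNNReal_mono ENNReal.coe_ne_top (hUd i)).trans (by simp)
    · rw [NNReal.rpow_inv_le_iff hσ]
      have : (e i : ℝ≥0∞) ≤ (min 1 (ρ ^ (σ : ℝ)) : NNReal) := (ENNReal.le_tsum i).trans hesum.le
      exact (ENNReal.coe_le_coe.1 this).trans (min_le_right _ _)
  · rw [ENNReal.coe_max, ENNReal.coe_toNNReal (hne i)]
    exact le_max_left _ _
  · have key : ∀ i, ((max (Metric.ediam (U i)).toNNReal (e i ^ (σ : ℝ)⁻¹) : NNReal) : ℝ≥0∞)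
        ^ (σ : ℝ) ≤ (⨆ _ : (U i).Nonempty, Metric.ediam (U i) ^ (σ : ℝ)) + e i := by
      intro i
      rw [ENNReal.coe_max, ENNReal.coe_toNNReal (hne i)]
      rcases max_cases (Metric.ediam (U i)) ((e i ^ (σ : ℝ)⁻¹ : NNReal) : ℝ≥0∞) with h | h
      · rw [h.1]
        refine le_add_right ?_
        rcases (U i).eq_empty_or_nonempty with hempty | hne
        · simp [hempty, hσ]
        · exact le_iSup (fun _ : (U i).Nonempty => Metric.ediam (U i) ^ (σ : ℝ)) hne
      · rw [h.1, ← ENNReal.coe_rpow_of_nonneg _ hσ.le, NNReal.rpow_inv_rpow hσ.ne']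
        exact le_add_self
    refine (ENNReal.tsum_le_tsum key).trans ?_
    rw [ENNReal.tsum_add, ← one_add_one_eq_two]
    refine add_le_add hsum.le (hesum.le.trans ?_)
    exact_mod_cast min_le_left _ _

/-- A piece of `A` of diameter at most `d` and a cover of `X` by `d ^ (-t)` balls of radius `d`
give `d ^ (-t)` pieces of `{a - g x}` of diameter `O(d)`, so the exponents `σ` and `t` add. -/
lemma dimH_image2_sub_le_of_lt {A : Set (AddCircle (1:ℝ))} {X : Set ℝ}
    {g : ℝ → AddCircle (1:ℝ)} {C : NNReal} (hg : LipschitzOnWith C g X) {σ t : NNReal}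
    (hA : dimH A < σ) (hX : upperBoxDim X < t) :
    dimH (image2 (fun a x => a - g x) A X) ≤ σ + t := by
  obtain ⟨δ, hδ, hcov⟩ := exists_cover_of_upperBoxDim_lt hX
  have hσ : (0 : ℝ) < σ := by
    have : (0 : ℝ≥0∞) < σ := bot_le.trans_lt hA
    exact_mod_cast this
  have hst : (0 : ℝ) ≤ (σ : ℝ) + t := by positivity
  set K : NNReal := 1 + C * 2 with hK
  have step : ∀ n : ℕ, ∃ (s : ℕ → Finset ℝ) (W : (Σ i, s i) → Set (AddCircle (1:ℝ))),
      (image2 (fun a x => a - g x) A X ⊆ ⋃ p, W p) ∧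
      (∀ p, Metric.ediam (W p) ≤ K * (δ / 2 * (1 / ((n : NNReal) + 1)) : NNReal)) ∧
      ∑' p, Metric.ediam (W p) ^ ((σ : ℝ) + t) ≤ ((K ^ ((σ : ℝ) + t) : NNReal) : ℝ≥0∞) * 2 := by
    intro n
    have hρ : 0 < δ / 2 * (1 / ((n : NNReal) + 1)) := by positivity
    have hρδ : δ / 2 * (1 / ((n : NNReal) + 1)) < δ := by
      refine lt_of_le_of_lt (mul_le_of_le_one_right (by positivity) ?_) (half_lt_self hδ)
      rw [div_le_iff₀ (by positivity)]; simp
    obtain ⟨U, d, hU, hd, hUd, hsum⟩ := exists_fine_cover_of_dimH_lt hA hρ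
    choose s hs hcard using fun i => hcov (d i) (hd i).1 ((hd i).2.trans_lt hρδ)
    have hW : ∀ (i : ℕ) (c : ℝ), Metric.ediam (image2 (fun a x => a - g x) (U i)
        (X ∩ Metric.ball c (d i))) ≤ ((K * d i : NNReal) : ℝ≥0∞) := by
      intro i c
      refine Metric.ediam_le ?_
      rintro _ ⟨a, ha, x, ⟨hx, hxc⟩, rfl⟩ _ ⟨a', ha', x', ⟨hx', hxc'⟩, rfl⟩
      have h1 : edist a a' ≤ d i := (Metric.edist_le_ediam_of_mem ha ha').trans (hUd i)
      rw [edist_nndist, ENNReal.coe_le_coe] at h1 ⊢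
      have h2 : nndist x x' ≤ 2 * d i := by
        rw [← NNReal.coe_le_coe]
        push_cast
        rw [Metric.mem_ball] at hxc hxc'
        linarith [dist_triangle_right x x' c]
      have h3 : nndist (g x) (g x') ≤ C * nndist x x' := by
        have := hg hx hx'
        rw [edist_nndist, edist_nndist] at this
        exact_mod_cast this
      calc nndist (a - g x) (a' - g x') ≤ nndist a a' + nndist (g x) (g x') :=
            by simpa [← NNReal.coe_le_coe] using dist_sub_sub_le a (g x) a' (g x')
        _ ≤ d i + C * (2 * d i) := add_le_add h1 (h3.trans (by gcongr))
        _ = K * d i := by rw [hK]; ring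
    refine ⟨s, fun p => image2 (fun a x => a - g x) (U p.1)
      (X ∩ Metric.ball (p.2 : ℝ) (d p.1)), ?_, fun p => ?_, ?_⟩
    · rintro _ ⟨a, ha, x, hx, rfl⟩
      obtain ⟨i, hi⟩ := mem_iUnion.1 (hU ha)
      obtain ⟨c, hc, hxc⟩ := mem_iUnion₂.1 (hs i hx)
      exact mem_iUnion.2 ⟨⟨i, c, hc⟩, a, hi, x, ⟨hx, hxc⟩, rfl⟩
    · refine (hW _ _).trans ?_
      rw [← ENNReal.coe_mul, ENNReal.coe_le_coe]
      exact mul_le_mul_right (hd p.1).2 K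
    · have hi : ∀ i, ∑' c : s i, Metric.ediam (image2 (fun a x => a - g x) (U i)
          (X ∩ Metric.ball (c : ℝ) (d i))) ^ ((σ : ℝ) + t) ≤
          ((K ^ ((σ : ℝ) + t) : NNReal) : ℝ≥0∞) * (d i : ℝ≥0∞) ^ (σ : ℝ) := by
        intro i
        calc _ ≤ ∑' c : s i, (((K * d i) ^ ((σ : ℝ) + t) : NNReal) : ℝ≥0∞) := by
              refine ENNReal.tsum_le_tsum fun c => ?_
              rw [ENNReal.coe_rpow_of_nonneg _ hst]
              exact ENNReal.rpow_le_rpow (hW i c) hst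
          _ = (((s i).card * (K * d i) ^ ((σ : ℝ) + t) : NNReal) : ℝ≥0∞) := by
              rw [tsum_fintype]; simp
          _ ≤ ((K ^ ((σ : ℝ) + t) * d i ^ (σ : ℝ) : NNReal) : ℝ≥0∞) := by
              rw [ENNReal.coe_le_coe]
              calc _ ≤ d i ^ (-(t : ℝ)) * (K * d i) ^ ((σ : ℝ) + t) :=
                    mul_le_mul_left (hcard i) _
                _ = K ^ ((σ : ℝ) + t) * d i ^ (σ : ℝ) := by
                    rw [NNReal.mul_rpow, mul_left_comm, ← NNReal.rpow_add (hd i).1.ne']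
                    congr 2; ring
          _ = _ := by rw [ENNReal.coe_mul, ← ENNReal.coe_rpow_of_nonneg _ hσ.le]
      rw [ENNReal.tsum_sigma']
      refine (ENNReal.tsum_le_tsum hi).trans ?_
      rw [ENNReal.tsum_mul_left]
      gcongr
  choose s W hW hdiam hsum using step
  have hlim : Tendsto (fun n : ℕ => (K : ℝ≥0∞) *
      (δ / 2 * (1 / ((n : NNReal) + 1)) : NNReal)) atTop (𝓝 0) := by
    have h1 : Tendsto (fun n : ℕ => K * (δ / 2 * (1 / ((n : NNReal) + 1)))) atTop (𝓝 0) := by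
      have := (tendsto_one_div_add_atTop_nhds_zero_nat (𝕜 := NNReal)).const_mul (δ / 2)
      simpa using this.const_mul K
    simpa only [ENNReal.coe_mul, ENNReal.coe_zero] using ENNReal.tendsto_coe.2 h1
  have hμ := Measure.hausdorffMeasure_le_liminf_tsum ((σ : ℝ) + t)
    (image2 (fun a x => a - g x) A X) _ hlim W (Eventually.of_forall hdiam)
    (Eventually.of_forall hW)
  have hfin : μH[((σ + t : NNReal) : ℝ)] (image2 (fun a x => a - g x) A X) ≠ ⊤ := by
    push_cast
    refine (hμ.trans_lt ?_).ne
    refine ((liminf_le_liminf (Eventually.of_forall hsum)).trans_eq (liminf_const _)).trans_lt ?_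
    exact ENNReal.mul_lt_top ENNReal.coe_lt_top (by simp)
  exact_mod_cast dimH_le_of_hausdorffMeasure_ne_top hfin

lemma dimH_image2_sub_le {A : Set (AddCircle (1:ℝ))} {X : Set ℝ}
    {g : ℝ → AddCircle (1:ℝ)} {C : NNReal} (hg : LipschitzOnWith C g X) :
    dimH (image2 (fun a x => a - g x) A X) ≤ dimH A + upperBoxDim X := by
  by_cases h : dimH A = ⊤ ∨ upperBoxDim X = ⊤
  · rcases h with h | h <;> simp [h]
  push Not at h
  refine ENNReal.le_of_forall_pos_le_add fun ε hε _ => ?_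
  have hε' : ((ε / 2 : NNReal) : ℝ≥0∞) ≠ 0 := by simpa using hε.ne'
  have h1 := dimH_image2_sub_le_of_lt hg (A := A) (σ := (dimH A).toNNReal + ε / 2)
    (t := (upperBoxDim X).toNNReal + ε / 2)
    (by rw [ENNReal.coe_add, ENNReal.coe_toNNReal h.1]; exact ENNReal.lt_add_right h.1 hε')
    (by rw [ENNReal.coe_add, ENNReal.coe_toNNReal h.2]; exact ENNReal.lt_add_right h.2 hε')
  rw [ENNReal.coe_add, ENNReal.coe_add, ENNReal.coe_toNNReal h.1, ENNReal.coe_toNNReal h.2,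
    add_add_add_comm, ← ENNReal.coe_add, add_halves] at h1
  exact h1

/-! ### Local difference sets under a diffeomorphism -/

lemma fracPart_mul (b : ℕ) {s t : ℝ} (hs : s ≠ 0) (ht : t ≠ 0) :
    fracPart b (s * t) = fracPart b s + fracPart b t := by
  unfold fracPart
  rw [abs_mul, Real.logb_mul (abs_ne_zero.2 hs) (abs_ne_zero.2 ht), ← AddCircle.coe_add]
  congr 1; ring

lemma continuousAt_fracPart (b : ℕ) {s : ℝ} (hs : s ≠ 0) : ContinuousAt (fracPart b) s := by
  have h1 : ContinuousAt (fun s : ℝ => -Real.logb b |s|) s := by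
    unfold Real.logb
    exact (((Real.continuousAt_log (abs_ne_zero.2 hs)).comp continuous_abs.continuousAt).div_const
      _).neg
  exact (AddCircle.continuous_mk' (1:ℝ)).continuousAt.comp h1

/-- Difference quotients of `f` near `x` tend to `f' x`, so `f` translates the local difference
set at `x` by `{f' x}_b`. -/
lemma add_fracPart_mem_localDiffSet (b : ℕ) {X : Set ℝ} {f : ℝ → ℝ} {m x : ℝ}
    (hinj : Function.Injective f) (hf : HasStrictDerivAt f m x) (hm : m ≠ 0)
    {t : AddCircle (1:ℝ)} (ht : t ∈ localDiffSet b X x) :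
    t + fracPart b m ∈ localDiffSet b (f '' X) (f x) := by
  obtain ⟨u, v, hu, hv, hne, hux, hvx, hlim⟩ := ht
  have hc : ContinuousAt f x := hf.hasDerivAt.continuousAt
  refine ⟨f ∘ u, f ∘ v, fun n => mem_image_of_mem f (hu n), fun n => mem_image_of_mem f (hv n),
    fun n h => hne n (hinj h), hc.tendsto.comp hux, hc.tendsto.comp hvx, ?_⟩
  have hq : Tendsto (fun n => (f (u n) - f (v n)) / (u n - v n)) atTop (𝓝 m) := by
    have h1 := hf.isLittleO.comp_tendsto (hux.prodMk_nhds hvx)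
    have h2 := h1.tendsto_div_nhds_zero
    have h3 := h2.add_const m
    rw [zero_add] at h3
    refine h3.congr fun n => ?_
    have : u n - v n ≠ 0 := sub_ne_zero.2 (hne n)
    simp
    field_simp
    ring
  refine (hlim.add ((continuousAt_fracPart b hm).tendsto.comp hq)).congr fun n => ?_
  have h1 : u n - v n ≠ 0 := sub_ne_zero.2 (hne n)
  have h2 : f (u n) - f (v n) ≠ 0 := sub_ne_zero.2 fun h => hne n (hinj h)
  simp only [Function.comp]
  rw [← fracPart_mul b h1 (div_ne_zero h2 h1), mul_div_cancel₀ _ h1]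

lemma lipschitzWith_coe_addCircle : LipschitzWith 1 (fun x : ℝ => (x : AddCircle (1:ℝ))) := by
  refine LipschitzWith.of_dist_le_mul fun x y => ?_
  rw [dist_eq_norm, dist_eq_norm, ← AddCircle.coe_sub, NNReal.coe_one, one_mul]
  exact QuotientAddGroup.norm_mk_le_norm

/-- On bounded sets `x ↦ {f' x}_b` is Lipschitz: it lifts to the `C¹` function
`-log_b |f'|`. -/
lemma exists_lipschitzOnWith_fracPart_deriv (b : ℕ) {f : ℝ → ℝ} (hf : IsC2Diffeo f) {X : Set ℝ}
    (hX : Bornology.IsBounded X) :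
    ∃ C, LipschitzOnWith C (fun x => fracPart b (deriv f x)) X := by
  have h1 : ContDiff ℝ 1 (fun x => -Real.logb b |deriv f x|) := by
    have hd : ContDiff ℝ 1 (deriv f) := by
      have h2 : ContDiff ℝ (1 + 1) f := by
        rw [one_add_one_eq_two]; exact hf.1
      exact (contDiff_succ_iff_deriv.1 h2).2.2
    simp only [Real.logb, Real.log_abs]
    exact ((hd.log hf.2.2).div_const _).neg
  obtain ⟨R, hR⟩ := hX.subset_closedBall 0
  obtain ⟨C, hC⟩ := h1.contDiffOn.exists_lipschitzOnWith one_ne_zero (convex_closedBall 0 R)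
    (isCompact_closedBall 0 R)
  exact ⟨1 * C, lipschitzWith_coe_addCircle.comp_lipschitzOnWith (hC.mono hR)⟩

/-- **Proposition 3.2, first part.** For `X ⊆ ℝ`, a `C²`-diffeomorphism `f : ℝ → ℝ` and
`Y = f(X)`, we have `dim F_{b,Y}(Y) ≥ dim F_{b,X}(X) - bdim X`. -/
theorem dimH_localDiffSetTotal_image_ge
    (b : ℕ) (hb : 2 ≤ b) (X : Set ℝ) (f : ℝ → ℝ) (hf : IsC2Diffeo f) :
    dimH (localDiffSetTotal b X) - upperBoxDim X ≤ dimH (localDiffSetTotal b (f '' X)) := by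
  by_cases hX : upperBoxDim X = ⊤
  · simp [hX]
  obtain ⟨C, hC⟩ :=
    exists_lipschitzOnWith_fracPart_deriv b hf (isBounded_of_upperBoxDim_ne_top hX)
  refine tsub_le_iff_right.2 ((dimH_mono ?_).trans (dimH_image2_sub_le hC))
  intro t ht
  obtain ⟨x, hx, htx⟩ := mem_iUnion₂.1 ht
  have hd : HasStrictDerivAt f (deriv f x) x :=
    hf.1.contDiffAt.hasStrictDerivAt two_ne_zero
  refine ⟨t + fracPart b (deriv f x), mem_iUnion₂.2 ⟨f x, mem_image_of_mem f hx, ?_⟩, x, hx,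
    add_sub_cancel_right _ _⟩
  exact add_fracPart_mem_localDiffSet b hf.2.1.injective hd (hf.2.2 x) htx
end

section
/- Let a, b ≥ 2 be integers with log a / log b ∉ ℚ, and let X ⊆ ℝ/ℤ be an infinite closed T_a-invariant set. Then F_{b,X}(X) = ℝ/ℤ, i.e. the union of the b-adic local difference sets of X over all points of X is the whole circle. -/
/-!
The set of small differences of `X` is dense in logarithmic scale, modulo `log b`. As `X` is
infinite and compact it has an accumulation point, so it contains pairs of distinct points whose
difference has an arbitrarily small lift `d ≠ 0` (`exists_small_lift`). Applying `T_a` `k` times to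
such a pair multiplies `d` by `a ^ k`, hence rotates `{d}_b` by `-k log_b a`
(`fracPart_pow_mul`). The rotation number is irrational, so by compactness of the circle a number
`K` of iterates depending only on `ε` brings every starting position `ε`-close to every target
(`exists_nsmul_near`). If `d` is small enough in terms of `K`, all these iterated differences are
still small and nonzero, which gives `exists_near_target`. Letting `ε → 0` and extracting a
subsequence along which the points converge in `X` realises every `t` as an element of some
`F_{b,X}(x)`.
-/

open Filter Topology Set MeasureTheory ENNReal

/-- Applying `T_a` `k` times rotates the `b`-adic fractional part by `-k log_b a`. -/
lemma fracPart_pow_mul_s14 {a b : ℕ} (ha : a ≠ 0) (k : ℕ) {d : ℝ} (hd : d ≠ 0) :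
    fracPart b ((a : ℝ) ^ k * d)
      = fracPart b d - k • ((Real.logb b a : ℝ) : AddCircle (1:ℝ)) := by
  have ha' : (a : ℝ) ^ k ≠ 0 := pow_ne_zero _ (Nat.cast_ne_zero.mpr ha)
  unfold fracPart
  rw [abs_mul, Real.logb_mul (abs_ne_zero.mpr ha') (abs_ne_zero.mpr hd), abs_pow, Nat.abs_cast,
    Real.logb_pow, ← AddCircle.coe_nsmul, ← AddCircle.coe_sub]
  congr 1
  simp only [nsmul_eq_mul]
  ring

lemma iterate_TaC (a k : ℕ) (x : AddCircle (1:ℝ)) : (TaC a)^[k] x = a ^ k • x := by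
  induction k with
  | zero => simp
  | succ k ih => rw [Function.iterate_succ_apply', ih, TaC, smul_smul, pow_succ']

lemma coe_ne_zero_of_abs_lt_one {d : ℝ} (hd : d ≠ 0) (h1 : |d| < 1) :
    (d : AddCircle (1:ℝ)) ≠ 0 := by
  rw [Ne, AddCircle.coe_eq_zero_iff]
  rintro ⟨n, rfl⟩
  rw [zsmul_eq_mul, mul_one] at hd h1
  have hn : |n| < 1 := by exact_mod_cast h1
  exact hd (by rw [Int.abs_lt_one_iff.mp hn, Int.cast_zero])

/-- The bound `K` is uniform in the target `s`: it comes from a finite subcover of the circle by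
balls centred at the multiples of `θ`. -/
lemma exists_nsmul_near {θ : ℝ} (hθ : Irrational θ) {ε : ℝ} (hε : 0 < ε) :
    ∃ K : ℕ, ∀ s : AddCircle (1:ℝ), ∃ k ≤ K, dist s (k • (θ : AddCircle (1:ℝ))) < ε := by
  have hdense : DenseRange (fun k : ℕ => k • (θ : AddCircle (1:ℝ))) :=
    denseRange_zsmul_iff_nsmul.mp (AddCircle.denseRange_zsmul_coe_iff.mpr (by simpa using hθ))
  obtain ⟨F, hF⟩ := isCompact_univ.elim_finite_subcover
    (fun k : ℕ => Metric.ball (k • (θ : AddCircle (1:ℝ))) ε) (fun _ => Metric.isOpen_ball)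
    (fun s _ => by
      obtain ⟨k, hk⟩ := hdense.exists_dist_lt s hε
      exact mem_iUnion.mpr ⟨k, hk⟩)
  refine ⟨F.sup id, fun s => ?_⟩
  obtain ⟨k, hk, hs⟩ := mem_iUnion₂.mp (hF (mem_univ s))
  exact ⟨k, Finset.le_sup (f := id) hk, hs⟩

lemma exists_small_lift {X : Set (AddCircle (1:ℝ))} (hXinf : X.Infinite) (hXcl : IsClosed X)
    {ε : ℝ} (hε : 0 < ε) :
    ∃ u ∈ X, ∃ v ∈ X, ∃ d : ℝ, d ≠ 0 ∧ |d| < ε ∧ (d : AddCircle (1:ℝ)) = u - v := by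
  obtain ⟨x, hxX, hx⟩ :=
    hXinf.exists_accPt_of_subset_isCompact hXcl.isCompact Subset.rfl
  obtain ⟨y, ⟨hyε, hyX⟩, hyx⟩ := accPt_iff_nhds.mp hx _ (Metric.ball_mem_nhds x hε)
  obtain ⟨r, hr⟩ := QuotientAddGroup.mk_surjective (y - x)
  -- `r - round r` is the lift of `y - x` of least absolute value.
  have hlift : ((r - round r : ℝ) : AddCircle (1:ℝ)) = y - x := by
    have h0 : ((round r : ℝ) : AddCircle (1:ℝ)) = 0 :=
      (AddCircle.coe_eq_zero_iff 1).mpr ⟨round r, by simp⟩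
    rw [AddCircle.coe_sub, h0, sub_zero]
    exact hr
  refine ⟨y, hyX, x, hxX, r - round r, fun h => hyx ?_, ?_, hlift⟩
  · rw [h, AddCircle.coe_zero] at hlift
    exact sub_eq_zero.mp hlift.symm
  · rw [← UnitAddCircle.norm_eq]
    have := Metric.mem_ball.mp hyε
    rw [dist_eq_norm, ← hr] at this
    exact this

lemma exists_near_target {a b : ℕ} (ha : 2 ≤ a)
    (hab : Irrational (Real.log a / Real.log b))
    {X : Set (AddCircle (1:ℝ))} (hXinf : X.Infinite) (hXcl : IsClosed X)
    (hXinv : Set.MapsTo (TaC a) X X) (t : AddCircle (1:ℝ)) {ε : ℝ} (hε : 0 < ε) :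
    ∃ (u v : AddCircle (1:ℝ)) (d : ℝ), u ∈ X ∧ v ∈ X ∧ u ≠ v ∧ d ≠ 0 ∧
      (d : AddCircle (1:ℝ)) = u - v ∧ |d| < ε ∧ dist (fracPart b d) t < ε := by
  obtain ⟨K, hK⟩ := exists_nsmul_near hab hε
  have ha1 : (1 : ℝ) ≤ a := by exact_mod_cast (by omega : 1 ≤ a)
  have ha0 : (0 : ℝ) < (a : ℝ) ^ K := by positivity
  have hm : 0 < min ε 1 := lt_min hε one_pos
  obtain ⟨u, hu, v, hv, d, hd0, hd, huv⟩ := exists_small_lift hXinf hXcl (div_pos hm ha0)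
  obtain ⟨k, hkK, hk⟩ := hK (fracPart b d - t)
  have hlift : (((a : ℝ) ^ k * d : ℝ) : AddCircle (1:ℝ)) = (TaC a)^[k] u - (TaC a)^[k] v := by
    rw [iterate_TaC, iterate_TaC, ← nsmul_sub, ← huv, ← AddCircle.coe_nsmul, nsmul_eq_mul,
      Nat.cast_pow]
  have hne : (a : ℝ) ^ k * d ≠ 0 := mul_ne_zero (by positivity) hd0
  have hlt : |(a : ℝ) ^ k * d| < min ε 1 := by
    rw [abs_mul, abs_of_nonneg (by positivity)]
    calc (a : ℝ) ^ k * |d| ≤ (a : ℝ) ^ K * |d| := by gcongr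
      _ < min ε 1 := by rwa [mul_comm, ← lt_div_iff₀ ha0]
  refine ⟨(TaC a)^[k] u, (TaC a)^[k] v, (a : ℝ) ^ k * d, hXinv.iterate k hu, hXinv.iterate k hv,
    fun h => ?_, hne, hlift, hlt.trans_le (min_le_left _ _), ?_⟩
  · exact coe_ne_zero_of_abs_lt_one hne (hlt.trans_le (min_le_right _ _))
      (by rw [hlift, h, sub_self])
  · rw [fracPart_pow_mul_s14 (by omega) k hd0]
    rw [dist_eq_norm] at hk ⊢
    rwa [Real.logb, sub_right_comm]

/-- **Claim in Section 4.** If `X ⊆ ℝ/ℤ` is an infinite closed `T_a`-invariant set and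
`log a / log b ∉ ℚ`, then `F_{b,X}(X) = ℝ/ℤ`. -/
theorem localDiffSetTotalC_eq_univ
    (a b : ℕ) (ha : 2 ≤ a) (hb : 2 ≤ b)
    (hab : Irrational (Real.log a / Real.log b))
    (X : Set (AddCircle (1:ℝ))) (hXinf : X.Infinite) (hXcl : IsClosed X)
    (hXinv : Set.MapsTo (TaC a) X X) :
    localDiffSetTotalC b X = Set.univ := by
  refine eq_univ_of_forall fun t => ?_
  have hpos (n : ℕ) : (0 : ℝ) < 1 / ((n : ℝ) + 1) := Nat.one_div_pos_of_nat
  choose u v d hu hv huv hd0 hlift hd ht using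
    fun n : ℕ => exists_near_target ha hab hXinf hXcl hXinv t (hpos n)
  obtain ⟨x, hxX, φ, hφ, hux⟩ := hXcl.isCompact.tendsto_subseq hu
  have hd' : Tendsto d atTop (𝓝 0) :=
    squeeze_zero_norm (fun n => (hd n).le) tendsto_one_div_add_atTop_nhds_zero_nat
  have ht' : Tendsto (fun n => fracPart b (d n)) atTop (𝓝 t) :=
    tendsto_iff_dist_tendsto_zero.mpr <| squeeze_zero (fun _ => dist_nonneg)
      (fun n => (ht n).le) tendsto_one_div_add_atTop_nhds_zero_nat
  have hdφ : Tendsto (d ∘ φ) atTop (𝓝 0) := hd'.comp hφ.tendsto_atTop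
  -- `v = u - d` with `d → 0`, so both sequences have the same limit.
  have hvx : Tendsto (v ∘ φ) atTop (𝓝 x) := by
    have hc : Tendsto (fun n => ((d (φ n) : ℝ) : AddCircle (1:ℝ))) atTop (𝓝 0) := by
      have := (AddCircle.continuous_mk' (1:ℝ)).tendsto 0 |>.comp hdφ
      simpa using! this
    have := hux.sub hc
    rw [sub_zero] at this
    refine this.congr fun n => ?_
    simp only [Function.comp_apply, hlift]
    abel
  exact mem_iUnion₂.mpr ⟨x, hxX, u ∘ φ, v ∘ φ, d ∘ φ, fun n => hu _, fun n => hv _,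
    fun n => huv _, fun n => hd0 _, fun n => hlift _, hux, hvx, hdφ, ht'.comp hφ.tendsto_atTop⟩
end

section
/- Let a ≥ 2 be an integer and X ⊆ ℝ. If x_n → x in ℝ, t_n ∈ F_{a,X}(x_n) for each n, and t_n → t in ℝ/ℤ, then t ∈ F_{a,X}(x). Consequently, if X is compact then F_{a,X}(X) = ⋃_{x∈X} F_{a,X}(x) is a closed subset of ℝ/ℤ. -/
/-!
The set `F_{a,X}(x)` is a slice of a single closed set: let `G ⊆ ℝ × ℝ × ℝ/ℤ` be the graph of
`(u, v) ↦ {u - v}_a` over the off-diagonal pairs of `X`. All spaces being first countable,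
`t ∈ F_{a,X}(x)` says exactly that `(x, x, t) ∈ closure G` (`mem_localDiffSet_iff`). Hence the
relation `{(x, t) | t ∈ F_{a,X}(x)}` is closed in `ℝ × ℝ/ℤ`, which is the semi-continuity claim.
For compact `X`, the part of this relation over `X` is compact since `ℝ/ℤ` is, and `F_{a,X}(X)` is
its projection to `ℝ/ℤ`.
-/

open Filter Topology Set MeasureTheory ENNReal

/-- The graph of `(u, v) ↦ {u - v}_a` over pairs of distinct points of `X`. -/
def diffGraph (a : ℕ) (X : Set ℝ) : Set (ℝ × ℝ × AddCircle (1:ℝ)) :=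
  {p | p.1 ∈ X ∧ p.2.1 ∈ X ∧ p.1 ≠ p.2.1 ∧ p.2.2 = fracPart a (p.1 - p.2.1)}

lemma mem_localDiffSet_iff (a : ℕ) (X : Set ℝ) (x : ℝ) (t : AddCircle (1:ℝ)) :
    t ∈ localDiffSet a X x ↔ (x, x, t) ∈ closure (diffGraph a X) := by
  rw [mem_closure_iff_seq_limit]
  constructor
  · rintro ⟨u, v, hu, hv, huv, hux, hvx, ht⟩
    exact ⟨fun n => (u n, v n, fracPart a (u n - v n)),
      fun n => ⟨hu n, hv n, huv n, rfl⟩, hux.prodMk_nhds (hvx.prodMk_nhds ht)⟩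
  · rintro ⟨p, hp, hlim⟩
    rw [Prod.tendsto_iff, Prod.tendsto_iff] at hlim
    obtain ⟨h1, h2, h3⟩ := hlim
    refine ⟨fun n => (p n).1, fun n => (p n).2.1, fun n => (hp n).1, fun n => (hp n).2.1,
      fun n => (hp n).2.2.1, h1, h2, ?_⟩
    exact h3.congr fun n => (hp n).2.2.2

lemma isClosed_localDiffSet_relation (a : ℕ) (X : Set ℝ) :
    IsClosed {p : ℝ × AddCircle (1:ℝ) | p.2 ∈ localDiffSet a X p.1} := by
  simp only [mem_localDiffSet_iff]
  exact isClosed_closure.preimage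
    (f := fun p : ℝ × AddCircle (1:ℝ) => (p.1, p.1, p.2)) (by fun_prop)

/-- **Property 6 (semi-continuity).** If `x_n → x`, `t_n ∈ F_{a,X}(x_n)` and `t_n → t` in
`ℝ/ℤ`, then `t ∈ F_{a,X}(x)`; consequently, for compact `X` the set `F_{a,X}(X)` is closed. -/
theorem localDiffSet_semicontinuous_and_closed
    (a : ℕ) (ha : 2 ≤ a) (X : Set ℝ) :
    (∀ (x : ℝ) (xs : ℕ → ℝ) (ts : ℕ → AddCircle (1:ℝ)) (t : AddCircle (1:ℝ)),
      Tendsto xs atTop (nhds x) →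
      (∀ n, ts n ∈ localDiffSet a X (xs n)) →
      Tendsto ts atTop (nhds t) →
      t ∈ localDiffSet a X x) ∧
    (IsCompact X → IsClosed (localDiffSetTotal a X)) := by
  refine ⟨fun x xs ts t hx hts ht => ?_, fun hX => ?_⟩
  · exact (isClosed_localDiffSet_relation a X).mem_of_tendsto (hx.prodMk_nhds ht)
      (Eventually.of_forall hts)
  · have hK := ((hX.prod (isCompact_univ (X := AddCircle (1:ℝ)))).inter_right
      (isClosed_localDiffSet_relation a X)).image continuous_snd
    convert hK.isClosed using 1
    ext t
    simp [localDiffSetTotal]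
end

section
/- Let a ≥ 2 be an integer and let X ⊆ ℝ/ℤ be an infinite closed minimal T_a-invariant set. Then there is a single non-empty closed set E ⊆ ℝ/ℤ such that F_{a,X}(x) = E for every x ∈ X. -/
/-!
Fix `t`. The condition `t ∈ F_{a,X}(x)` says that `(x, x, 0, t)` lies in the closure of the set
`diffData a X` of quadruples `(u, v, d, {d}_a)` with `u ≠ v` in `X` and `d ≠ 0` a real lift of
`u - v` (`mem_localDiffSetC_iff`). Hence each `F_{a,X}(x)` is closed, and so is the set of `x` with
`t ∈ F_{a,X}(x)`. The latter set is also forward invariant under `T_a`: multiplying `u, v, d` by `a`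
does not change `{d}_a`, because `log_a |a d| = 1 + log_a |d|`, and keeps `u ≠ v` as soon as
`|a d| < 1` (`localDiffSetC_subset_TaC`). As orbits are dense in `X`, if it contains one point of
`X` then it contains all of them, so `F_{a,X}` is constant on `X`.

For non-emptiness, an infinite minimal set has no isolated point: an isolated point would be
periodic, and `X` would be its finite orbit. So every `x ∈ X` is a limit of other points of `X`, and
compactness of `ℝ/ℤ` provides a limit point of the fractional parts.
-/

open Filter Topology Set MeasureTheory ENNReal

/-- The quadruples `(u, v, d, {d}_a)` where `u ≠ v` are points of `X` and `d ≠ 0` is a real lift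
of `u - v`. -/
def diffData (a : ℕ) (X : Set (AddCircle (1:ℝ))) :
    Set (AddCircle (1:ℝ) × AddCircle (1:ℝ) × ℝ × AddCircle (1:ℝ)) :=
  {p | p.1 ∈ X ∧ p.2.1 ∈ X ∧ p.1 ≠ p.2.1 ∧ p.2.2.1 ≠ 0 ∧
    (p.2.2.1 : AddCircle (1:ℝ)) = p.1 - p.2.1 ∧ p.2.2.2 = fracPart a p.2.2.1}

lemma mem_localDiffSetC_iff (a : ℕ) (X : Set (AddCircle (1:ℝ))) (x t : AddCircle (1:ℝ)) :
    t ∈ localDiffSetC a X x ↔ (x, x, (0:ℝ), t) ∈ closure (diffData a X) := by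
  rw [mem_closure_iff_seq_limit]
  constructor
  · rintro ⟨u, v, d, hu, hv, huv, hd, hduv, hu', hv', hd', ht⟩
    exact ⟨fun n => (u n, v n, d n, fracPart a (d n)),
      fun n => ⟨hu n, hv n, huv n, hd n, hduv n, rfl⟩,
      hu'.prodMk_nhds (hv'.prodMk_nhds (hd'.prodMk_nhds ht))⟩
  · rintro ⟨p, hp, hlim⟩
    have h2 := (continuous_snd.tendsto _).comp hlim
    have h3 := (continuous_snd.tendsto _).comp h2
    have h4 := (continuous_snd.tendsto _).comp h3
    refine ⟨fun n => (p n).1, fun n => (p n).2.1, fun n => (p n).2.2.1, fun n => (hp n).1,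
      fun n => (hp n).2.1, fun n => (hp n).2.2.1, fun n => (hp n).2.2.2.1,
      fun n => (hp n).2.2.2.2.1, (continuous_fst.tendsto _).comp hlim,
      (continuous_fst.tendsto _).comp h2, (continuous_fst.tendsto _).comp h3, ?_⟩
    exact h4.congr fun n => (hp n).2.2.2.2.2

lemma isClosed_localDiffSetC (a : ℕ) (X : Set (AddCircle (1:ℝ))) (x : AddCircle (1:ℝ)) :
    IsClosed (localDiffSetC a X x) := by
  have h : localDiffSetC a X x = (fun t => (x, x, (0:ℝ), t)) ⁻¹' closure (diffData a X) :=
    Set.ext fun t => mem_localDiffSetC_iff a X x t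
  rw [h]
  exact isClosed_closure.preimage (by fun_prop)

/-- Upper semicontinuity of `x ↦ F_{a,X}(x)`, one value `t` at a time. -/
lemma isClosed_setOf_mem_localDiffSetC (a : ℕ) (X : Set (AddCircle (1:ℝ)))
    (t : AddCircle (1:ℝ)) : IsClosed {x | t ∈ localDiffSetC a X x} := by
  simp only [mem_localDiffSetC_iff]
  exact isClosed_closure.preimage
    (f := fun x : AddCircle (1:ℝ) => (x, x, (0:ℝ), t)) (by fun_prop)

lemma fracPart_mul_s19 (a : ℕ) (ha : 2 ≤ a) (d : ℝ) (hd : d ≠ 0) :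
    fracPart a (a * d) = fracPart a d := by
  have ha' : (1:ℝ) < a := by exact_mod_cast ha
  have h : -Real.logb a |a * d| = -Real.logb a |d| - 1 := by
    rw [abs_mul, Nat.abs_cast, Real.logb_mul (by positivity) (abs_ne_zero.2 hd),
      Real.logb_self_eq_one ha']
    ring
  rw [fracPart, fracPart, h, AddCircle.coe_sub, AddCircle.coe_period, sub_zero]

lemma localDiffSetC_subset_TaC (a : ℕ) (ha : 2 ≤ a) (X : Set (AddCircle (1:ℝ)))
    (hXinv : Set.MapsTo (TaC a) X X) (x : AddCircle (1:ℝ)) :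
    localDiffSetC a X x ⊆ localDiffSetC a X (TaC a x) := by
  intro t ht
  rw [mem_localDiffSetC_iff] at ht ⊢
  have ha' : (0:ℝ) < a := by exact_mod_cast (by omega : 0 < a)
  -- Only quadruples with `|a d| < 1` matter near `d = 0`.
  have hopen : IsOpen {p : AddCircle (1:ℝ) × AddCircle (1:ℝ) × ℝ × AddCircle (1:ℝ) |
      |(a:ℝ) * p.2.2.1| < 1} := isOpen_lt (by fun_prop) continuous_const
  have h1 := hopen.inter_closure ⟨show |(a:ℝ) * 0| < 1 by simp, ht⟩
  have hcont : Continuous (fun p : AddCircle (1:ℝ) × AddCircle (1:ℝ) × ℝ × AddCircle (1:ℝ) =>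
      (a • p.1, a • p.2.1, (a:ℝ) * p.2.2.1, p.2.2.2)) := by fun_prop
  have h2 := map_mem_closure (t := diffData a X) hcont h1 ?_
  · simpa [TaC] using h2
  · rintro ⟨u, v, d, s⟩ ⟨hlt, hu, hv, huv, hd, hduv, hs⟩
    replace hlt : |(a:ℝ) * d| < 1 := hlt
    dsimp only at *
    have hlift : (((a:ℝ) * d : ℝ) : AddCircle (1:ℝ)) = a • u - a • v := by
      rw [← smul_sub, ← hduv, ← AddCircle.coe_nsmul, nsmul_eq_mul]
    refine ⟨hXinv hu, hXinv hv, ?_, mul_ne_zero ha'.ne' hd, hlift, ?_⟩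
    · intro heq
      rw [show a • u = a • v from heq, sub_self, AddCircle.coe_eq_zero_iff] at hlift
      obtain ⟨n, hn⟩ := hlift
      rw [zsmul_eq_mul, mul_one] at hn
      rw [← hn] at hlt
      have hn0 : n = 0 := Int.abs_lt_one_iff.1 (by exact_mod_cast hlt)
      rw [hn0, Int.cast_zero] at hn
      exact mul_ne_zero ha'.ne' hd hn.symm
    · rw [show s = fracPart a d from hs]
      exact (fracPart_mul_s19 a ha d hd).symm

lemma localDiffSetC_subset_of_minimal (a : ℕ) (ha : 2 ≤ a) (X : Set (AddCircle (1:ℝ)))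
    (hXinv : Set.MapsTo (TaC a) X X)
    (hXmin : ∀ x ∈ X, X ⊆ closure {y | ∃ n : ℕ, 1 ≤ n ∧ (TaC a)^[n] x = y})
    (x y : AddCircle (1:ℝ)) (hx : x ∈ X) (hy : y ∈ X) :
    localDiffSetC a X x ⊆ localDiffSetC a X y := by
  intro t ht
  refine closure_minimal (t := {z | t ∈ localDiffSetC a X z}) ?_
    (isClosed_setOf_mem_localDiffSetC a X t) (hXmin x hx hy)
  rintro _ ⟨n, -, rfl⟩
  induction n with
  | zero => exact ht
  | succ k ih =>
    rw [Function.iterate_succ_apply']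
    exact localDiffSetC_subset_TaC a ha X hXinv _ ih

/-- An infinite minimal set has no isolated points. -/
lemma mem_closure_diff_singleton_of_minimal (a : ℕ) (X : Set (AddCircle (1:ℝ)))
    (hXinf : X.Infinite) (hXinv : Set.MapsTo (TaC a) X X)
    (hXmin : ∀ x ∈ X, X ⊆ closure {y | ∃ n : ℕ, 1 ≤ n ∧ (TaC a)^[n] x = y})
    (x : AddCircle (1:ℝ)) (hx : x ∈ X) : x ∈ closure (X \ {x}) := by
  by_contra hiso
  -- The orbit of `x` meets the neighbourhood of `x` in which `x` is the only point of `X`.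
  obtain ⟨_, hyiso, n, hn, rfl⟩ := mem_closure_iff.1 (hXmin x hx hx) _
    isClosed_closure.isOpen_compl hiso
  have hper : (TaC a)^[n] x = x := by
    by_contra hne
    exact hyiso (subset_closure ⟨hXinv.iterate n hx, hne⟩)
  have hfin : {y | ∃ n : ℕ, 1 ≤ n ∧ (TaC a)^[n] x = y}.Finite := by
    refine ((Set.finite_lt_nat n).image fun k => (TaC a)^[k] x).subset ?_
    rintro _ ⟨m, -, rfl⟩
    exact ⟨m % n, Nat.mod_lt _ hn, Function.IsPeriodicPt.iterate_mod_apply hper m⟩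
  exact hXinf (hfin.subset (hfin.isClosed.closure_eq ▸ hXmin x hx))

lemma localDiffSetC_nonempty (a : ℕ) (X : Set (AddCircle (1:ℝ))) (x : AddCircle (1:ℝ))
    (hx : x ∈ X) (hacc : x ∈ closure (X \ {x})) : (localDiffSetC a X x).Nonempty := by
  -- The covering map is open, so points of `X` near `x` have the form `x + d` with `d` near `0`.
  have hfreq : ∃ᶠ d : ℝ in 𝓝 0, x + (d : AddCircle (1:ℝ)) ∈ X \ {x} := by
    have hop : IsOpenMap fun d : ℝ => x + (d : AddCircle (1:ℝ)) :=
      (isOpenMap_add_left x).comp QuotientAddGroup.isOpenMap_coe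
    have hle := hop.nhds_le 0
    rw [AddCircle.coe_zero, add_zero] at hle
    exact Filter.frequently_map.1 ((mem_closure_iff_frequently.1 hacc).filter_mono hle)
  -- `ℝ/ℤ` is compact, so forgetting the fractional part is a closed map on quadruples.
  have hclosed : IsClosed
      ((Prod.fst : (AddCircle (1:ℝ) × AddCircle (1:ℝ) × ℝ) × AddCircle (1:ℝ) → _) ''
        ((fun q => (q.1.1, q.1.2.1, q.1.2.2, q.2)) ⁻¹' closure (diffData a X))) :=
    isClosedMap_fst_of_compactSpace _ (isClosed_closure.preimage (by fun_prop))
  have hlim : Tendsto (fun d : ℝ => (x + (d : AddCircle (1:ℝ)), x, d)) (𝓝 0) (𝓝 (x, x, 0)) := by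
    have hc : Continuous fun d : ℝ => (x + (d : AddCircle (1:ℝ)), x, d) := by
      have := AddCircle.continuous_mk' (1:ℝ)
      exact (continuous_const.add this).prodMk (continuous_const.prodMk continuous_id)
    simpa using hc.tendsto 0
  have hmem := hclosed.mem_of_frequently_of_tendsto (hfreq.mono fun d hd =>
    ⟨((x + d, x, d), fracPart a d), subset_closure ⟨hd.1, hx, hd.2, ?_, ?_, rfl⟩, rfl⟩) hlim
  · obtain ⟨⟨_, t⟩, ht, rfl⟩ := hmem
    exact ⟨t, (mem_localDiffSetC_iff a X x t).2 ht⟩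
  · rintro rfl
    exact hd.2 (by simp)
  · simp

/-- **Section 5.** For an infinite closed minimal `T_a`-invariant `X ⊆ ℝ/ℤ`, the local
difference set `F_{a,X}(x)` is the same non-empty closed set `E` for every `x ∈ X`. -/
theorem localDiffSetC_constant_on_minimal
    (a : ℕ) (ha : 2 ≤ a) (X : Set (AddCircle (1:ℝ))) (hXinf : X.Infinite)
    (hXcl : IsClosed X) (hXinv : Set.MapsTo (TaC a) X X)
    (hXmin : ∀ x ∈ X, X ⊆ closure {y | ∃ n : ℕ, 1 ≤ n ∧ (TaC a)^[n] x = y}) :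
    ∃ E : Set (AddCircle (1:ℝ)), E.Nonempty ∧ IsClosed E ∧
      ∀ x ∈ X, localDiffSetC a X x = E := by
  obtain ⟨x₀, hx₀⟩ := hXinf.nonempty
  refine ⟨localDiffSetC a X x₀, localDiffSetC_nonempty a X x₀ hx₀
    (mem_closure_diff_singleton_of_minimal a X hXinf hXinv hXmin x₀ hx₀),
    isClosed_localDiffSetC a X x₀, fun x hx => Set.Subset.antisymm ?_ ?_⟩
  · exact localDiffSetC_subset_of_minimal a ha X hXinv hXmin x x₀ hx hx₀
  · exact localDiffSetC_subset_of_minimal a ha X hXinv hXmin x₀ x hx₀ hx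
end
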